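/- arXiv:2002.05119 — 9 statements merged into one kernel-verified Lean document; each statement's English description precedes it below -/
import Mathlib

section
/- For every instance with three agents having additive nonnegative valuations over a finite set M of indivisible goods, there exists a complete EFX allocation: a partition of M into bundles X_1, X_2, X_3 such that for all agents i, j and every good g ∈ X_j, v_i(X_i) ≥ v_i(X_j ∖ {g}). -/
open Finset

/-- Additive value of a bundle `S` under per-good valuation `v`. -/
noncomputable def val {G : Type*} (v : G → ℝ) (S : Finset G) : ℝ := ∑ g ∈ S, v g

/-- `X` is EFX: no agent `i` strongly envies agent `j`, i.e. for every good `g`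
in `X j`, `v_i(X_i) ≥ v_i(X_j \ {g})`. -/
def EFX {G : Type*} [DecidableEq G] (v : Fin 3 → G → ℝ) (X : Fin 3 → Finset G) : Prop :=
  ∀ i j : Fin 3, ∀ g ∈ X j, val (v i) (X j \ {g}) ≤ val (v i) (X i)

namespace ThreeAgentEFX

universe u w

variable {G K : Type*} [DecidableEq G] [LinearOrder K]

/-- `X`, `Y`, `Z` form a partition of `M` into three possibly empty bundles. -/
structure IsPartition (M X Y Z : Finset G) : Prop where
  disjoint_fst_snd : Disjoint X Y
  disjoint_fst_trd : Disjoint X Z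
  disjoint_snd_trd : Disjoint Y Z
  union_eq : X ∪ Y ∪ Z = M

/-- An owner of `A` with valuation `f` does not strongly envy the bundle `B`. -/
def NoStrongEnvy (f : Finset G → K) (A B : Finset G) : Prop :=
  ∀ g ∈ B, f (B.erase g) ≤ f A

/-- Some assignment of the bundles of a partition of `M` to agents with valuations `f`, `p`, `q`
is free of strong envy. -/
def HasEFX {K₁ K₂ K₃ : Type*} [LinearOrder K₁] [LinearOrder K₂] [LinearOrder K₃]
    (f : Finset G → K₁) (p : Finset G → K₂) (q : Finset G → K₃) (M : Finset G) : Prop :=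
  ∃ X Y Z, IsPartition M X Y Z ∧ NoStrongEnvy f X Y ∧ NoStrongEnvy f X Z ∧
    NoStrongEnvy p Y X ∧ NoStrongEnvy p Y Z ∧ NoStrongEnvy q Z X ∧ NoStrongEnvy q Z Y

/-- `X` and `Y` are EFX-feasible for the agent with valuation `f`, and `Z` is EFX-feasible for at
least one of the other two agents. -/
structure Admissible {K₁ K₂ K₃ : Type*} [LinearOrder K₁] [LinearOrder K₂] [LinearOrder K₃]
    (f : Finset G → K₁) (p : Finset G → K₂) (q : Finset G → K₃) (M X Y Z : Finset G) :
    Prop where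
  isPartition : IsPartition M X Y Z
  fst_snd : NoStrongEnvy f X Y
  fst_trd : NoStrongEnvy f X Z
  snd_fst : NoStrongEnvy f Y X
  snd_trd : NoStrongEnvy f Y Z
  trd : (NoStrongEnvy p Z X ∧ NoStrongEnvy p Z Y) ∨ (NoStrongEnvy q Z X ∧ NoStrongEnvy q Z Y)

/-- Every split of a set into two parts has a part worth at least the minimum part of any other
split of the same set. -/
def MMSFeasible (f : Finset G → K) : Prop :=
  ∀ A B C D : Finset G, Disjoint A B → Disjoint C D → A ∪ B = C ∪ D →
    min (f A) (f B) ≤ max (f C) (f D)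

namespace IsPartition

variable {M X Y Z : Finset G}

lemma swap_fst_snd (h : IsPartition M X Y Z) : IsPartition M Y X Z :=
  ⟨h.1.symm, h.3, h.2, by rw [union_comm Y X]; exact h.4⟩

lemma swap_snd_trd (h : IsPartition M X Y Z) : IsPartition M X Z Y :=
  ⟨h.2, h.1, h.3.symm, by rw [union_right_comm]; exact h.4⟩

/-- A good of the third bundle may be moved to the first. -/
lemma move (h : IsPartition M X Y Z) {g : G} (hg : g ∈ Z) :
    IsPartition M (insert g X) Y (Z.erase g) := by
  obtain ⟨h₁, h₂, h₃, rfl⟩ := h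
  rw [Finset.disjoint_left] at h₁ h₂ h₃
  refine ⟨?_, ?_, ?_, ?_⟩
  · rw [Finset.disjoint_left]; grind
  · rw [Finset.disjoint_left]; grind
  · rw [Finset.disjoint_left]; grind
  · ext x; grind

/-- The first bundle may be shrunk, the removed goods going to the third bundle. -/
lemma shrink (h : IsPartition M X Y Z) {X' : Finset G} (hX : X' ⊆ X) :
    IsPartition M X' Y (Z ∪ (X \ X')) := by
  obtain ⟨h₁, h₂, h₃, rfl⟩ := h
  rw [Finset.disjoint_left] at h₁ h₂ h₃
  refine ⟨?_, ?_, ?_, ?_⟩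
  · rw [Finset.disjoint_left]; grind
  · rw [Finset.disjoint_left]; grind
  · rw [Finset.disjoint_left]; grind
  · ext x; grind

/-- The union of the first and the third bundle may be split differently. -/
lemma resplit (h : IsPartition M X Y Z) {P Q : Finset G} (hd : Disjoint P Q)
    (hu : P ∪ Q = X ∪ Z) : IsPartition M P Y Q := by
  obtain ⟨h₁, h₂, h₃, rfl⟩ := h
  rw [Finset.disjoint_left] at h₁ h₂ h₃
  simp only [Finset.ext_iff, mem_union] at hu
  refine ⟨?_, hd, ?_, ?_⟩
  · rw [Finset.disjoint_left]; grind
  · rw [Finset.disjoint_left]; grind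
  · ext x; grind

lemma mem_powerset (h : IsPartition M X Y Z) :
    (X, Y, Z) ∈ M.powerset ×ˢ M.powerset ×ˢ M.powerset := by
  obtain ⟨-, -, -, rfl⟩ := h
  simp only [mem_product, Finset.mem_powerset]
  grind

end IsPartition

lemma lt_insert {f : Finset G → K} (hf : Monotone f) (hinj : f.Injective) {X : Finset G} {g : G}
    (hg : g ∉ X) : f X < f (insert g X) :=
  hf.strictMono_of_injective hinj (ssubset_insert hg)

lemma ne_of_disjoint {G : Type*} {f : Finset G → K} (hinj : f.Injective) {X Y : Finset G}
    (h : Disjoint X Y) (hX : f ∅ < f X) : f X ≠ f Y := by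
  intro heq
  obtain rfl := hinj heq
  rw [disjoint_self_iff_empty] at h
  simp [h] at hX

lemma noStrongEnvy_of_le {f : Finset G → K} (hf : Monotone f) {A B : Finset G} (h : f B ≤ f A) :
    NoStrongEnvy f A B :=
  fun g _ => (hf (erase_subset g B)).trans h

/-- Two bundles can be rearranged, without lowering the smaller value, so that neither is strongly
envied from the other. -/
lemma exists_balanced_pair {f : Finset G → K} (hf : Monotone f) (hinj : f.Injective)
    {A B : Finset G} (hAB : Disjoint A B) :
    ∃ P Q, Disjoint P Q ∧ P ∪ Q = A ∪ B ∧ min (f A) (f B) ≤ f P ∧ min (f A) (f B) ≤ f Q ∧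
      NoStrongEnvy f P Q ∧ NoStrongEnvy f Q P := by
  let S : Set (Finset G × Finset G) := {s | Disjoint s.1 s.2 ∧ s.1 ∪ s.2 = A ∪ B}
  have hfin : S.Finite := by
    refine ((A ∪ B).powerset ×ˢ (A ∪ B).powerset).finite_toSet.subset ?_
    rintro ⟨P, Q⟩ ⟨-, h⟩
    simp only [mem_coe, mem_product, mem_powerset, ← h]
    exact ⟨subset_union_left, subset_union_right⟩
  obtain ⟨⟨P, Q⟩, ⟨hd, hu⟩, hmax⟩ :=
    Set.exists_max_image S (fun s => min (f s.1) (f s.2)) hfin ⟨(A, B), hAB, rfl⟩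
  have key : ∀ P Q : Finset G, Disjoint P Q → P ∪ Q = A ∪ B →
      (∀ s ∈ S, min (f s.1) (f s.2) ≤ min (f P) (f Q)) → NoStrongEnvy f P Q := by
    intro P Q hd hu hmax g hg
    by_contra! hlt
    have hgP : g ∉ P := fun h => (Finset.disjoint_left.1 hd) h hg
    have hS : (insert g P, Q.erase g) ∈ S := by
      refine ⟨?_, ?_⟩
      · rw [Finset.disjoint_left] at hd ⊢; grind
      · rw [← hu]; ext x; grind
    have h := hmax _ hS
    have h' : min (f P) (f Q) ≤ f P := min_le_left _ _
    exact absurd (lt_min (lt_insert hf hinj hgP) hlt) (not_lt.2 (h.trans h'))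
  have hle := hmax (A, B) ⟨hAB, rfl⟩
  refine ⟨P, Q, hd, hu, hle.trans (min_le_left _ _), hle.trans (min_le_right _ _),
    key P Q hd hu hmax, key Q P hd.symm (by rw [union_comm, hu]) fun s hs => ?_⟩
  rw [min_comm (f Q)]
  exact hmax s hs

/-- If all bundles of some partition are worth more than `t`, then this holds for a partition in
which every bundle is EFX-feasible. -/
lemma exists_balanced_partition {f : Finset G → K} (hf : Monotone f) (hinj : f.Injective)
    {M A B C : Finset G} (h : IsPartition M A B C) {t : K} (hA : t < f A) (hB : t < f B)
    (hC : t < f C) (ht : f ∅ ≤ t) :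
    ∃ X Y Z, IsPartition M X Y Z ∧ t < f X ∧ t < f Y ∧ t < f Z ∧
      NoStrongEnvy f X Y ∧ NoStrongEnvy f X Z ∧ NoStrongEnvy f Y X ∧ NoStrongEnvy f Y Z ∧
      NoStrongEnvy f Z X ∧ NoStrongEnvy f Z Y := by
  let S : Set (Finset G × Finset G × Finset G) := {s | IsPartition M s.1 s.2.1 s.2.2}
  have hfin : S.Finite :=
    (M.powerset ×ˢ M.powerset ×ˢ M.powerset).finite_toSet.subset fun _ hs => hs.mem_powerset
  obtain ⟨⟨X, Y, Z⟩, hP, hmax⟩ :=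
    Set.exists_max_image S (fun s => min (f s.1) (min (f s.2.1) (f s.2.2))) hfin ⟨(A, B, C), h⟩
  have key : ∀ X Y Z : Finset G, IsPartition M X Y Z → t < f X →
      (∀ s ∈ S, min (f s.1) (min (f s.2.1) (f s.2.2)) ≤ min (f X) (min (f Y) (f Z))) →
      f X ≤ f Y → NoStrongEnvy f X Z := by
    intro X Y Z hP hX hmax hXY g hg
    by_contra! hlt
    have hgX : g ∉ X := fun h => (Finset.disjoint_left.1 hP.2) h hg
    have h := hmax (insert g X, Y, Z.erase g) (hP.move hg)
    have hXY' := lt_of_le_of_ne hXY (ne_of_disjoint hinj hP.1 (ht.trans_lt hX))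
    exact absurd (lt_min (lt_insert hf hinj hgX) (lt_min hXY' hlt))
      (not_lt.2 (h.trans (min_le_left _ _)))
  have envyFree : ∀ X Y Z : Finset G, IsPartition M X Y Z → t < f X → t < f Y →
      (∀ s ∈ S, min (f s.1) (min (f s.2.1) (f s.2.2)) ≤ min (f X) (min (f Y) (f Z))) →
      NoStrongEnvy f X Z := by
    intro X Y Z hP hX hY hmax
    rcases le_total (f X) (f Y) with hXY | hXY
    · exact key X Y Z hP hX hmax hXY
    · intro g hg
      refine (key Y X Z hP.swap_fst_snd hY (fun s hs => ?_) hXY g hg).trans hXY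
      rw [min_left_comm (f Y)]; exact hmax s hs
  have hlt : t < min (f X) (min (f Y) (f Z)) :=
    (lt_min hA (lt_min hB hC)).trans_le (hmax (A, B, C) h)
  obtain ⟨hX, hY, hZ⟩ : t < f X ∧ t < f Y ∧ t < f Z := by simpa using hlt
  have e₁ : min (f X) (min (f Z) (f Y)) = min (f X) (min (f Y) (f Z)) := by
    rw [min_comm (f Z)]
  have e₂ : min (f Y) (min (f X) (f Z)) = min (f X) (min (f Y) (f Z)) := min_left_comm _ _ _
  have e₃ : min (f Y) (min (f Z) (f X)) = min (f X) (min (f Y) (f Z)) := by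
    rw [min_comm (f Z), e₂]
  have e₄ : min (f Z) (min (f X) (f Y)) = min (f X) (min (f Y) (f Z)) := by
    rw [min_left_comm, e₁]
  have e₅ : min (f Z) (min (f Y) (f X)) = min (f X) (min (f Y) (f Z)) := by
    rw [min_comm (f Y), e₄]
  exact ⟨X, Y, Z, hP, hX, hY, hZ,
    envyFree X Z Y hP.swap_snd_trd hX hZ (by rwa [e₁]),
    envyFree X Y Z hP hX hY hmax,
    envyFree Y Z X hP.swap_fst_snd.swap_snd_trd hY hZ (by rwa [e₃]),
    envyFree Y X Z hP.swap_fst_snd hY hX (by rwa [e₂]),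
    envyFree Z Y X hP.swap_snd_trd.swap_fst_snd.swap_snd_trd hZ hY (by rwa [e₅]),
    envyFree Z X Y hP.swap_snd_trd.swap_fst_snd hZ hX (by rwa [e₄])⟩

/-- If neither of the first two bundles is EFX-feasible, then the third remains the best one after
the removal of a suitable good. -/
lemma exists_lt_erase {f : Finset G → K} (hf : Monotone f) {X Y Z : Finset G}
    (hX : ¬(NoStrongEnvy f X Y ∧ NoStrongEnvy f X Z))
    (hY : ¬(NoStrongEnvy f Y X ∧ NoStrongEnvy f Y Z)) :
    ∃ g ∈ Z, f X < f (Z.erase g) ∧ f Y < f (Z.erase g) := by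
  rcases le_total (f X) (f Y) with h | h
  · have hZ : ¬NoStrongEnvy f Y Z := fun h' => hY ⟨noStrongEnvy_of_le hf h, h'⟩
    simp only [NoStrongEnvy, not_forall, not_le] at hZ
    obtain ⟨g, hg, hlt⟩ := hZ
    exact ⟨g, hg, h.trans_lt hlt, hlt⟩
  · have hZ : ¬NoStrongEnvy f X Z := fun h' => hX ⟨noStrongEnvy_of_le hf h, h'⟩
    simp only [NoStrongEnvy, not_forall, not_le] at hZ
    obtain ⟨g, hg, hlt⟩ := hZ
    exact ⟨g, hg, hlt, h.trans_lt hlt⟩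

lemma noStrongEnvy_of_not_feasible {f : Finset G → K} (hf : Monotone f) {X Y Z : Finset G}
    (hX : ¬(NoStrongEnvy f X Y ∧ NoStrongEnvy f X Z))
    (hY : ¬(NoStrongEnvy f Y X ∧ NoStrongEnvy f Y Z)) :
    NoStrongEnvy f Z X ∧ NoStrongEnvy f Z Y := by
  obtain ⟨g, -, hgX, hgY⟩ := exists_lt_erase hf hX hY
  have hg := hf (erase_subset g Z)
  exact ⟨noStrongEnvy_of_le hf (hgX.le.trans hg), noStrongEnvy_of_le hf (hgY.le.trans hg)⟩

section Valuations

variable {K₁ K₂ K₃ : Type*} [LinearOrder K₁] [LinearOrder K₂] [LinearOrder K₃]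
  {f : Finset G → K₁} {p : Finset G → K₂} {q : Finset G → K₃} {M X Y Z : Finset G}

lemma HasEFX.swap (h : HasEFX f q p M) : HasEFX f p q M := by
  obtain ⟨X, Y, Z, hP, h₁, h₂, h₃, h₄, h₅, h₆⟩ := h
  exact ⟨X, Z, Y, hP.swap_snd_trd, h₂, h₁, h₅, h₆, h₃, h₄⟩

namespace Admissible

lemma swap_agents (h : Admissible f p q M X Y Z) : Admissible f q p M X Y Z :=
  ⟨h.1, h.2, h.3, h.4, h.5, h.6.symm⟩

lemma swap_bundles (h : Admissible f p q M X Y Z) : Admissible f p q M Y X Z :=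
  ⟨h.1.swap_fst_snd, h.4, h.5, h.2, h.3, h.6.imp And.symm And.symm⟩

/-- Without EFX allocations, if the third bundle is EFX-feasible for one of the last two agents,
then the first two bundles are not EFX-feasible for the other. -/
lemma not_feasible (h : Admissible f p q M X Y Z) (hE : ¬HasEFX f p q M)
    (hZ : NoStrongEnvy p Z X ∧ NoStrongEnvy p Z Y) :
    ¬(NoStrongEnvy q X Y ∧ NoStrongEnvy q X Z) ∧
      ¬(NoStrongEnvy q Y X ∧ NoStrongEnvy q Y Z) :=
  ⟨fun hX => hE ⟨Y, Z, X, h.isPartition.swap_fst_snd.swap_snd_trd, h.snd_trd, h.snd_fst,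
      hZ.2, hZ.1, hX.1, hX.2⟩,
    fun hY => hE ⟨X, Z, Y, h.isPartition.swap_snd_trd, h.fst_trd, h.fst_snd, hZ.1, hZ.2,
      hY.1, hY.2⟩⟩

end Admissible

/-- If all bundles of some partition are worth more than `t` to the first agent, then there is an
admissible partition with this property. -/
lemma exists_admissible (hf : Monotone f) (hinj : f.Injective) (hp : Monotone p)
    (h : IsPartition M X Y Z) {t : K₁} (hX : t < f X) (hY : t < f Y) (hZ : t < f Z)
    (ht : f ∅ ≤ t) : ∃ A B C, Admissible f p q M A B C ∧ t < f A ∧ t < f B := by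
  obtain ⟨A, B, C, hP, hA, hB, hC, hAB, hAC, hBA, hBC, hCA, hCB⟩ :=
    exists_balanced_partition hf hinj h hX hY hZ ht
  rcases le_total (p A) (p B) with h₁ | h₁
  · rcases le_total (p B) (p C) with h₂ | h₂
    · exact ⟨A, B, C, ⟨hP, hAB, hAC, hBA, hBC,
        .inl ⟨noStrongEnvy_of_le hp (h₁.trans h₂), noStrongEnvy_of_le hp h₂⟩⟩, hA, hB⟩
    · exact ⟨A, C, B, ⟨hP.swap_snd_trd, hAC, hAB, hCA, hCB,
        .inl ⟨noStrongEnvy_of_le hp h₁, noStrongEnvy_of_le hp h₂⟩⟩, hA, hC⟩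
  · rcases le_total (p A) (p C) with h₂ | h₂
    · exact ⟨A, B, C, ⟨hP, hAB, hAC, hBA, hBC,
        .inl ⟨noStrongEnvy_of_le hp h₂, noStrongEnvy_of_le hp (h₁.trans h₂)⟩⟩, hA, hB⟩
    · exact ⟨B, C, A, ⟨hP.swap_fst_snd.swap_snd_trd, hBC, hBA, hCB, hCA,
        .inl ⟨noStrongEnvy_of_le hp h₁, noStrongEnvy_of_le hp h₂⟩⟩, hB, hC⟩

/-- Shrinking a first bundle that is worth more than the second yields an admissible partition,
provided the third bundle is good enough for the agent with valuation `p`. -/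
lemma exists_admissible_of_lt (hf : Monotone f) (hinj : f.Injective) (hp : Monotone p)
    (h : IsPartition M X Y Z) {t : K₁} (ht : f ∅ ≤ t) (hY : t < f Y) (hXY : f Y < f X)
    (hZY : p Y ≤ p Z) (hZX : ∀ X' ⊆ X, NoStrongEnvy f Y X' → p X' ≤ p Z) :
    ∃ A B C, Admissible f p q M A B C ∧ t < f A ∧ t < f B := by
  have hfin : {S : Finset G | S ⊆ X ∧ f Y < f S}.Finite :=
    X.powerset.finite_toSet.subset fun S hS => by simpa using hS.1
  obtain ⟨X', ⟨hsub, hlt⟩, hmin⟩ :=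
    Set.exists_min_image _ Finset.card hfin ⟨X, Subset.rfl, hXY⟩
  have hYX : NoStrongEnvy f Y X' := by
    intro g hg
    by_contra! hg'
    have := hmin (X'.erase g) ⟨(erase_subset _ _).trans hsub, hg'⟩
    exact absurd (card_erase_lt_of_mem hg) (not_lt.2 this)
  have hP := h.shrink hsub
  have hpZ : p Z ≤ p (Z ∪ (X \ X')) := hp subset_union_left
  rcases lt_or_ge t (f (Z ∪ (X \ X'))) with hZ | hZ
  · exact exists_admissible hf hinj hp hP (hY.trans hlt) hY hZ ht
  · have hZ' := hZ.trans hY.le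
    exact ⟨X', Y, _, ⟨hP, noStrongEnvy_of_le hf hlt.le, noStrongEnvy_of_le hf (hZ'.trans hlt.le),
      hYX, noStrongEnvy_of_le hf hZ',
      .inl ⟨noStrongEnvy_of_le hp ((hZX X' hsub hYX).trans hpZ),
        noStrongEnvy_of_le hp (hZY.trans hpZ)⟩⟩, hY.trans hlt, hY⟩

/-- Improvement by moving a good from the third to the first bundle, when the third bundle remains
the favourite of the agent with valuation `p`. -/
lemma Admissible.exists_of_move (hf : Monotone f) (hinj : f.Injective) (hp : Monotone p)
    (h : Admissible f p q M X Y Z) (hXY : f X < f Y) {g : G} (hg : g ∈ Z)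
    (hY : p Y < p (Z.erase g)) (hX : p (insert g X) ≤ p (Z.erase g)) :
    ∃ A B C, Admissible f p q M A B C ∧ f X < f A ∧ f X < f B := by
  have hP := h.isPartition.move hg
  have hgX : g ∉ X := fun h' => (Finset.disjoint_left.1 h.isPartition.2) h' hg
  have hlt := lt_insert hf hinj hgX
  rcases lt_or_ge (f Y) (f (insert g X)) with hc | hc
  · exact exists_admissible_of_lt hf hinj hp hP (hf (empty_subset X)) hXY hc hY.le
      fun X' hX' _ => (hp hX').trans hX
  · have hZ : ∀ k ∈ Z.erase g, f ((Z.erase g).erase k) ≤ f X := fun k hk =>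
      (hf (erase_subset_erase k (erase_subset g Z))).trans (h.fst_trd k (mem_of_mem_erase hk))
    exact ⟨_, Y, _, ⟨hP, fun k hk => (h.fst_snd k hk).trans hlt.le,
      fun k hk => (hZ k hk).trans hlt.le, noStrongEnvy_of_le hf hc,
      fun k hk => (hZ k hk).trans hXY.le,
      .inl ⟨noStrongEnvy_of_le hp hX, noStrongEnvy_of_le hp hY.le⟩⟩, hlt, hXY⟩

/-- Improvement, or an EFX allocation, when the first and the third bundle are split into two parts
that the other two agents find acceptable. -/
lemma hasEFX_or_exists_of_split (hf : Monotone f) (hinj : f.Injective) (hp : Monotone p)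
    (hq : Monotone q) {t : K₁} (ht : f ∅ ≤ t) {P Q : Finset G} (h : IsPartition M P Y Q)
    (hY : t < f Y) (hpP : p Y < p P) (hpQ : p Y < p Q)
    (hPQ : NoStrongEnvy p P Q) (hQP : NoStrongEnvy p Q P) (hmax : q Y < max (q P) (q Q)) :
    HasEFX f p q M ∨ ∃ A B C, Admissible f p q M A B C ∧ t < f A ∧ t < f B := by
  wlog hle : q Q ≤ q P generalizing P Q
  · exact this h.swap_fst_snd.swap_snd_trd.swap_fst_snd hpQ hpP hQP hPQ (by rwa [max_comm])
      (le_of_not_ge hle)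
  rw [max_eq_left hle] at hmax
  by_cases hYP : NoStrongEnvy f Y P
  · by_cases hYQ : NoStrongEnvy f Y Q
    · exact .inl ⟨Y, Q, P, h.swap_fst_snd.swap_snd_trd, hYQ, hYP, noStrongEnvy_of_le hp hpQ.le,
        hQP, noStrongEnvy_of_le hq hmax.le, noStrongEnvy_of_le hq hle⟩
    · obtain ⟨A, B, C, hA, hlt⟩ := exists_admissible_of_lt (p := q) (q := p) hf hinj hq
        h.swap_fst_snd.swap_snd_trd.swap_fst_snd ht hY
        (lt_of_not_ge fun h' => hYQ (noStrongEnvy_of_le hf h')) hmax.le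
        fun X' hX' _ => (hq hX').trans hle
      exact .inr ⟨A, B, C, hA.swap_agents, hlt⟩
  · refine .inr (exists_admissible_of_lt hf hinj hp h ht hY
      (lt_of_not_ge fun h' => hYP (noStrongEnvy_of_le hf h')) hpQ.le fun X' hX' hYX' => ?_)
    have hne : X' ≠ P := by rintro rfl; exact hYP hYX'
    obtain ⟨k, hk, hkX⟩ := exists_of_ssubset (hX'.ssubset_of_ne hne)
    exact (hp (subset_erase.2 ⟨hX', hkX⟩)).trans (hQP k hk)

/-- An admissible partition either can be improved or gives rise to an EFX allocation. -/
lemma Admissible.hasEFX_or_exists (hf : Monotone f) (hfinj : f.Injective) (hp : Monotone p)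
    (hpinj : p.Injective) (hq : Monotone q) (hmms : MMSFeasible q)
    (h : Admissible f p q M X Y Z) (hle : f X ≤ f Y) :
    HasEFX f p q M ∨ ∃ A B C, Admissible f p q M A B C ∧ f X < f A ∧ f X < f B := by
  by_cases hE : HasEFX f p q M
  · exact .inl hE
  refine .inr ?_
  have infeasible : (¬(NoStrongEnvy p X Y ∧ NoStrongEnvy p X Z) ∧
      ¬(NoStrongEnvy p Y X ∧ NoStrongEnvy p Y Z)) ∧
      (¬(NoStrongEnvy q X Y ∧ NoStrongEnvy q X Z) ∧
      ¬(NoStrongEnvy q Y X ∧ NoStrongEnvy q Y Z)) := by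
    rcases h.trd with hZ | hZ
    · have hq' := h.not_feasible hE hZ
      exact ⟨h.swap_agents.not_feasible (fun h' => hE h'.swap)
        (noStrongEnvy_of_not_feasible hq hq'.1 hq'.2), hq'⟩
    · have hp' := h.swap_agents.not_feasible (fun h' => hE h'.swap) hZ
      exact ⟨hp', h.not_feasible hE (noStrongEnvy_of_not_feasible hp hp'.1 hp'.2)⟩
  obtain ⟨⟨hpX, hpY⟩, hqX, hqY⟩ := infeasible
  obtain ⟨g, hg, hgX, hgY⟩ := exists_lt_erase hp hpX hpY
  obtain ⟨k, hk, hkX, hkY⟩ := exists_lt_erase hq hqX hqY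
  have hlt : f X < f Y := by
    refine lt_of_le_of_ne hle fun heq => ?_
    obtain rfl := hfinj heq
    have hX : X = ∅ := (disjoint_self_iff_empty X).1 h.isPartition.1
    refine absurd (h.fst_trd g hg) (not_le.2 ?_)
    refine hf.strictMono_of_injective hfinj (hX ▸ empty_ssubset.2 ?_)
    rw [nonempty_iff_ne_empty]
    intro hZ
    rw [hX, hZ] at hgX
    exact hgX.false
  by_cases hcp : p (insert g X) ≤ p (Z.erase g)
  · exact h.exists_of_move hf hfinj hp hlt hg hgY hcp
  by_cases hcq : q (insert k X) ≤ q (Z.erase k)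
  · obtain ⟨A, B, C, hA, h'⟩ := h.swap_agents.exists_of_move hf hfinj hq hlt hk hkY hcq
    exact ⟨A, B, C, hA.swap_agents, h'⟩
  push Not at hcp hcq
  have hPg := h.isPartition.move hg
  have hPk := h.isPartition.move hk
  have union_move : ∀ x ∈ Z, insert x X ∪ Z.erase x = X ∪ Z := by
    intro x hx; ext y; grind
  obtain ⟨P, Q, hd, hu, hP, hQ, hPQ, hQP⟩ := exists_balanced_pair hp hpinj hPg.2
  have hmin : p Y < min (p (insert g X)) (p (Z.erase g)) := lt_min (hgY.trans hcp) hgY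
  have hmax : q Y < max (q P) (q Q) :=
    (lt_min (hkY.trans hcq) hkY).trans_le
      (hmms _ _ _ _ hPk.2 hd (by rw [hu, union_move k hk, union_move g hg]))
  exact (hasEFX_or_exists_of_split hf hfinj hp hq (hf (empty_subset X))
    (h.isPartition.resplit hd (hu.trans (union_move g hg))) hlt (hmin.trans_le hP)
    (hmin.trans_le hQ) hPQ hQP hmax).resolve_left hE

/-- An EFX allocation exists as soon as an admissible partition does. -/
lemma Admissible.hasEFX (hf : Monotone f) (hfinj : f.Injective) (hp : Monotone p)
    (hpinj : p.Injective) (hq : Monotone q) (hmms : MMSFeasible q)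
    (h : Admissible f p q M X Y Z) : HasEFX f p q M := by
  let S : Set (Finset G × Finset G × Finset G) := {s | Admissible f p q M s.1 s.2.1 s.2.2}
  have hfin : S.Finite :=
    (M.powerset ×ˢ M.powerset ×ˢ M.powerset).finite_toSet.subset
      fun _ hs => hs.isPartition.mem_powerset
  obtain ⟨⟨A, B, C⟩, hA, hmax⟩ :=
    Set.exists_max_image S (fun s => min (f s.1) (f s.2.1)) hfin ⟨(X, Y, Z), h⟩
  have key : ∀ A B : Finset G, Admissible f p q M A B C →
      (∀ s ∈ S, min (f s.1) (f s.2.1) ≤ f A) → f A ≤ f B → HasEFX f p q M := by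
    intro A B hA hmax hle
    refine (hA.hasEFX_or_exists hf hfinj hp hpinj hq hmms hle).resolve_right ?_
    rintro ⟨A', B', C', h', hlt⟩
    exact absurd (lt_min hlt.1 hlt.2) (not_lt.2 (hmax (A', B', C') h'))
  rcases le_total (f A) (f B) with hle | hle
  · exact key A B hA (fun s hs => (hmax s hs).trans (min_le_left _ _)) hle
  · exact key B A hA.swap_bundles (fun s hs => (hmax s hs).trans (min_le_right _ _)) hle

lemma noStrongEnvy_of_card_le_one (hf : Monotone f) (hX : #X ≤ 1) : NoStrongEnvy f Y X := by
  intro g hg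
  have : X.erase g = ∅ := by
    rw [← card_eq_zero, card_erase_of_mem hg]; omega
  rw [this]
  exact hf (empty_subset Y)

lemma IsPartition.hasEFX_of_card_le_one (hf : Monotone f) (hp : Monotone p) (hq : Monotone q)
    (h : IsPartition M X Y Z) (hX : #X ≤ 1) (hY : #Y ≤ 1) (hZ : #Z ≤ 1) : HasEFX f p q M :=
  ⟨X, Y, Z, h, noStrongEnvy_of_card_le_one hf hY, noStrongEnvy_of_card_le_one hf hZ,
    noStrongEnvy_of_card_le_one hp hX, noStrongEnvy_of_card_le_one hp hZ,
    noStrongEnvy_of_card_le_one hq hX, noStrongEnvy_of_card_le_one hq hY⟩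

/-- EFX allocations exist for two monotone valuations without ties and a monotone MMS-feasible
one. -/
theorem hasEFX (hf : Monotone f) (hfinj : f.Injective) (hp : Monotone p)
    (hpinj : p.Injective) (hq : Monotone q) (hmms : MMSFeasible q) (M : Finset G) :
    HasEFX f p q M := by
  rcases le_or_gt #M 1 with hM | hM
  · have h : IsPartition M M ∅ ∅ := ⟨by simp, by simp, by simp, by simp⟩
    exact h.hasEFX_of_card_le_one hf hp hq hM (by simp) (by simp)
  obtain ⟨x, hx, y, hy, hxy⟩ := one_lt_card.1 hM
  have h : IsPartition M {x} {y} (M \ {x, y}) := by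
    refine ⟨by simpa using hxy, by simp, by simp, ?_⟩
    ext z; grind
  rcases (M \ {x, y}).eq_empty_or_nonempty with hZ | hZ
  · exact h.hasEFX_of_card_le_one hf hp hq (by simp) (by simp) (by simp [hZ])
  have hpos : ∀ S : Finset G, S.Nonempty → f ∅ < f S := fun S hS =>
    hf.strictMono_of_injective hfinj (empty_ssubset.2 hS)
  obtain ⟨A, B, C, hA, -⟩ := exists_admissible (q := q) hf hfinj hp h
    (hpos _ (singleton_nonempty x)) (hpos _ (singleton_nonempty y)) (hpos _ hZ) le_rfl
  exact hA.hasEFX hf hfinj hp hpinj hq hmms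

end Valuations

lemma val_mono {G : Type*} {v : G → ℝ} (hv : ∀ g, 0 ≤ v g) : Monotone (val v) :=
  fun _ _ h => sum_le_sum_of_subset_of_nonneg h fun g _ _ => hv g

lemma mmsFeasible_val (v : G → ℝ) : MMSFeasible (val v) := by
  intro A B C D hAB hCD h
  have hsum : val v A + val v B = val v C + val v D := by
    simp only [_root_.val, ← sum_union hAB, ← sum_union hCD, h]
  by_contra! hlt
  rw [max_lt_iff, lt_min_iff, lt_min_iff] at hlt
  linarith [hlt.1.1, hlt.2.2]

/-- A monotone valuation can be refined to one without ties. -/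
lemma exists_injective_refinement {G : Type u} {K : Type w} [LinearOrder K]
    {f : Finset G → K} (hf : Monotone f) :
    ∃ (L : Type (max u w)) (_ : LinearOrder L) (f' : Finset G → L), Monotone f' ∧ f'.Injective ∧
      ∀ A B, f' A ≤ f' B → f A ≤ f B := by
  let _ : LinearOrder G := IsWellOrder.linearOrder WellOrderingRel
  refine ⟨K ×ₗ Colex (Finset G), inferInstance, fun S => toLex (f S, toColex S), ?_, ?_, ?_⟩
  · exact fun A B h => Prod.Lex.toLex_mono ⟨hf h, Colex.toColex_mono h⟩
  · intro A B h
    exact toColex.injective (Prod.ext_iff.1 (toLex.injective h)).2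
  · exact fun A B h => Prod.Lex.monotone_fst _ _ h

end ThreeAgentEFX

open ThreeAgentEFX

/-- EFX allocations always exist for three agents with additive (nonnegative) valuations:
there is a partition of `M` into three pairwise-disjoint bundles covering `M` that is EFX. -/
theorem efx_exists_three_agents {G : Type*} [DecidableEq G] (M : Finset G)
    (v : Fin 3 → G → ℝ) (hv : ∀ i : Fin 3, ∀ g ∈ M, 0 ≤ v i g) :
    ∃ X : Fin 3 → Finset G,
      (∀ i, X i ⊆ M) ∧
      (∀ i j, i ≠ j → Disjoint (X i) (X j)) ∧
      X 0 ∪ X 1 ∪ X 2 = M ∧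
      EFX v X := by
  have hmono : ∀ i, Monotone (val fun g => |v i g|) := fun i => val_mono fun g => abs_nonneg _
  have hval : ∀ i, ∀ S ⊆ M, (val fun g => |v i g|) S = val (v i) S := fun i S hS =>
    sum_congr rfl fun g hg => abs_of_nonneg (hv i g (hS hg))
  obtain ⟨L₀, _, f, hf, hfinj, hfv⟩ := exists_injective_refinement (hmono 0)
  obtain ⟨L₁, _, p, hp, hpinj, hpv⟩ := exists_injective_refinement (hmono 1)
  obtain ⟨X, Y, Z, hP, h₁, h₂, h₃, h₄, h₅, h₆⟩ :=
    hasEFX hf hfinj hp hpinj (hmono 2) (mmsFeasible_val _) M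
  obtain ⟨hX, hY, hZ⟩ : X ⊆ M ∧ Y ⊆ M ∧ Z ⊆ M := by
    simpa only [mem_product, mem_powerset] using hP.mem_powerset
  refine ⟨![X, Y, Z], ?_, ?_, hP.union_eq, ?_⟩
  · intro i; fin_cases i <;> assumption
  · intro i j hij
    fin_cases i <;> fin_cases j <;>
      first | exact absurd rfl hij | simp [hP.1, hP.2, hP.3, hP.1.symm, hP.2.symm, hP.3.symm]
  · have hle : ∀ i, ∀ A ⊆ M, ∀ B ⊆ M, ∀ g,
        (val fun g => |v i g|) (B.erase g) ≤ (val fun g => |v i g|) A →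
          val (v i) (B \ {g}) ≤ val (v i) A := by
      intro i A hA B hB g h
      rwa [hval i A hA, hval i _ ((erase_subset _ _).trans hB), ← sdiff_singleton_eq_erase] at h
    have hself : ∀ i, ∀ A ⊆ M, ∀ g, val (v i) (A \ {g}) ≤ val (v i) A := fun i A hA g =>
      hle i A hA A hA g (hmono i (erase_subset g A))
    intro i j g hg
    fin_cases i <;> fin_cases j
    · exact hself 0 X hX g
    · exact hle 0 X hX Y hY g (hfv _ _ (h₁ g hg))
    · exact hle 0 X hX Z hZ g (hfv _ _ (h₂ g hg))
    · exact hle 1 Y hY X hX g (hpv _ _ (h₃ g hg))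
    · exact hself 1 Y hY g
    · exact hle 1 Y hY Z hZ g (hpv _ _ (h₄ g hg))
    · exact hle 2 Z hZ X hX g (h₅ g hg)
    · exact hle 2 Z hZ Y hY g (h₆ g hg)
    · exact hself 2 Z hZ g
end

section
/- Suppose ε > 0 satisfies ε·2^{m+1} < |v_i(S) − v_i(T)| for every agent i and all S, T ⊆ M with v_i(S) ≠ v_i(T). Then the perturbed instance is non-degenerate: for every agent i and all subsets S, T ⊆ M with S ≠ T, v'_i(S) ≠ v'_i(T). -/
open Finset

/-- The natural number whose binary digits are the indicator of `S`. -/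
def binaryCode {m : ℕ} (S : Finset (Fin m)) : ℕ := ∑ g ∈ S, 2 ^ (g : ℕ)

lemma binaryCode_eq_sum_map {m : ℕ} (S : Finset (Fin m)) :
    binaryCode S = ∑ k ∈ S.map Fin.valEmbedding, 2 ^ k := by
  simp [binaryCode]

lemma binaryCode_injective (m : ℕ) :
    Function.Injective (binaryCode : Finset (Fin m) → ℕ) := by
  intro S T h
  rw [binaryCode_eq_sum_map, binaryCode_eq_sum_map] at h
  exact Finset.map_injective _ (Finset.geomSum_injective le_rfl h)

lemma binaryCode_lt {m : ℕ} (S : Finset (Fin m)) : binaryCode S < 2 ^ m := by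
  rw [binaryCode_eq_sum_map]
  exact Nat.geomSum_lt le_rfl (by simp)

lemma val_perturbed {m : ℕ} (v : Fin m → ℝ) (ε : ℝ) (S : Finset (Fin m)) :
    val (fun g => v g + ε * 2 ^ ((g : ℕ) + 1)) S = val v S + ε * 2 * binaryCode S := by
  simp only [_root_.val, binaryCode, Finset.sum_add_distrib, Nat.cast_sum, Nat.cast_pow,
    Nat.cast_ofNat, Finset.mul_sum]
  congr 1
  exact Finset.sum_congr rfl fun g _ => by ring

/-- If `ε·2^(m+1)` is smaller than every nonzero value gap, the perturbed instance with
`v'_i(g_j) = v_i(g_j) + ε·2^j` is non-degenerate: distinct bundles get distinct values. -/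
theorem perturbed_instance_nondegenerate
    (m : ℕ) (v : Fin 3 → Fin m → ℝ) (hv : ∀ i g, 0 ≤ v i g)
    (ε : ℝ) (hε : 0 < ε)
    (hsep : ∀ (i : Fin 3) (S T : Finset (Fin m)),
      val (v i) S ≠ val (v i) T → ε * 2 ^ (m + 1) < |val (v i) S - val (v i) T|)
    (i : Fin 3) (S T : Finset (Fin m)) (hST : S ≠ T) :
    val (fun g => v i g + ε * 2 ^ ((g : ℕ) + 1)) S ≠
      val (fun g => v i g + ε * 2 ^ ((g : ℕ) + 1)) T := by
  rw [val_perturbed, val_perturbed]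
  intro h
  by_cases hval : val (v i) S = val (v i) T
  · rw [hval, add_right_inj] at h
    exact hST (binaryCode_injective m (Nat.cast_injective (mul_left_cancel₀ (by positivity) h)))
  · have hgap := hsep i S T hval
    have hdiff : val (v i) S - val (v i) T =
        ε * 2 * ((binaryCode T : ℝ) - binaryCode S) := by linarith
    have hcode : |(binaryCode T : ℝ) - binaryCode S| < 2 ^ m := by
      have hS : (binaryCode S : ℝ) < 2 ^ m := mod_cast binaryCode_lt S
      have hT : (binaryCode T : ℝ) < 2 ^ m := mod_cast binaryCode_lt T
      have hS₀ : (0 : ℝ) ≤ binaryCode S := Nat.cast_nonneg _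
      have hT₀ : (0 : ℝ) ≤ binaryCode T := Nat.cast_nonneg _
      rw [abs_lt]
      constructor <;> linarith
    rw [hdiff, abs_mul, abs_of_pos (by positivity : 0 < ε * 2), pow_succ', ← mul_assoc] at hgap
    exact lt_asymm hcode (lt_of_mul_lt_mul_left hgap (by positivity))
end

section
/- Suppose ε > 0 satisfies ε·2^{m+1} < |v_i(S) − v_i(T)| for every agent i and all S, T ⊆ M with v_i(S) ≠ v_i(T). Then every partial allocation X = (X_1, X_2, X_3) that is EFX with respect to the perturbed valuations v'_1, v'_2, v'_3 is also EFX with respect to the original valuations v_1, v_2, v_3. -/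
open Finset

/-- The perturbed value of a bundle is its value plus the total perturbation. -/
theorem val_add_perturbation {m : ℕ} (u : Fin m → ℝ) (ε : ℝ) (S : Finset (Fin m)) :
    val (fun g => u g + ε * 2 ^ ((g : ℕ) + 1)) S
      = val u S + ε * ∑ g ∈ S, (2 : ℝ) ^ ((g : ℕ) + 1) := by
  simp only [_root_.val, Finset.sum_add_distrib, Finset.mul_sum]

theorem sum_two_pow_succ_lt {m : ℕ} (S : Finset (Fin m)) :
    ∑ g ∈ S, (2 : ℝ) ^ ((g : ℕ) + 1) < 2 ^ (m + 1) := by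
  calc ∑ g ∈ S, (2 : ℝ) ^ ((g : ℕ) + 1)
      ≤ ∑ g : Fin m, (2 : ℝ) ^ ((g : ℕ) + 1) :=
        Finset.sum_le_sum_of_subset_of_nonneg (Finset.subset_univ S) fun _ _ _ => by positivity
    _ = 2 * ∑ k ∈ Finset.range m, (2 : ℝ) ^ k := by
        rw [Fin.sum_univ_eq_sum_range (fun k => (2 : ℝ) ^ (k + 1)), Finset.mul_sum]
        exact Finset.sum_congr rfl fun k _ => pow_succ' 2 k
    _ < 2 ^ (m + 1) := by
        rw [geom_sum_eq (by norm_num), pow_succ]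
        linarith

/-- If `ε·2^(m+1)` is smaller than every nonzero value gap, every partial allocation that is
EFX for the perturbed valuations `v'_i(g_j) = v_i(g_j) + ε·2^j` is EFX for the original ones. -/
theorem perturbed_efx_implies_efx
    (m : ℕ) (v : Fin 3 → Fin m → ℝ) (hv : ∀ i g, 0 ≤ v i g)
    (ε : ℝ) (hε : 0 < ε)
    (hsep : ∀ (i : Fin 3) (S T : Finset (Fin m)),
      val (v i) S ≠ val (v i) T → ε * 2 ^ (m + 1) < |val (v i) S - val (v i) T|)
    (X : Fin 3 → Finset (Fin m))
    (hdisj : ∀ i j, i ≠ j → Disjoint (X i) (X j))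
    (hEFX' : EFX (fun i g => v i g + ε * 2 ^ ((g : ℕ) + 1)) X) :
    EFX v X := by
  intro i j g hg
  by_contra! hlt
  have hgap := hsep i (X j \ {g}) (X i) hlt.ne'
  rw [abs_of_pos (sub_pos.mpr hlt)] at hgap
  have hle := hEFX' i j g hg
  simp only [val_add_perturbation] at hle
  have hpos : 0 ≤ ε * ∑ g ∈ X j \ {g}, (2 : ℝ) ^ ((g : ℕ) + 1) := by positivity
  have hbound := mul_lt_mul_of_pos_left (sum_two_pow_succ_lt (X i)) hε
  linarith
end

section
/- Let X be a partial allocation, let g be an unallocated good, and suppose agent i champions agent j; let G_{ij} be a maximum-cardinality subset G of X_j ∪ {g} with v_i((X_j ∪ {g}) ∖ G) > v_i(X_i). Then for every agent k (including i) and every h ∈ (X_j ∪ {g}) ∖ G_{ij}, v_k(((X_j ∪ {g}) ∖ G_{ij}) ∖ {h}) ≤ v_k(X_k). -/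
open Finset

/-- `κ_X(i,S)`: the minimum cardinality of a subset `S' ⊆ S` with `v_i(S') > v_i(X_i)`. -/
noncomputable def kappa {G : Type*} (v : G → ℝ) (Xi S : Finset G) : ℕ :=
  sInf {n : ℕ | ∃ S' ⊆ S, S'.card = n ∧ val v Xi < val v S'}

/-- Agent `i` is a most envious agent for the bundle `S` under allocation `X`. -/
def MostEnvious {G : Type*} (v : Fin 3 → G → ℝ) (X : Fin 3 → Finset G)
    (i : Fin 3) (S : Finset G) : Prop :=
  val (v i) (X i) < val (v i) S ∧
    ∀ k : Fin 3, val (v k) (X k) < val (v k) S →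
      kappa (v i) (X i) S ≤ kappa (v k) (X k) S

theorem kappa_le_card {G : Type*} {v : G → ℝ} {Xi S T : Finset G} (hT : T ⊆ S)
    (hlt : val v Xi < val v T) : kappa v Xi S ≤ T.card :=
  Nat.sInf_le ⟨T, hT, rfl, hlt⟩

theorem exists_card_eq_kappa {G : Type*} {v : G → ℝ} {Xi S : Finset G}
    (hlt : val v Xi < val v S) :
    ∃ T ⊆ S, T.card = kappa v Xi S ∧ val v Xi < val v T :=
  Nat.sInf_mem (s := {n : ℕ | ∃ S' ⊆ S, S'.card = n ∧ val v Xi < val v S'})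
    ⟨S.card, S, Subset.refl S, rfl, hlt⟩

/-- Removing a maximum-cardinality set that preserves envy leaves at most `kappa` goods. -/
theorem card_sdiff_le_kappa {G : Type*} [DecidableEq G] {v : G → ℝ} {Xi S R : Finset G}
    (hR : R ⊆ S) (hlt : val v Xi < val v S)
    (hmax : ∀ R' ⊆ S, val v Xi < val v (S \ R') → R'.card ≤ R.card) :
    (S \ R).card ≤ kappa v Xi S := by
  obtain ⟨T, hTS, hTcard, hTval⟩ := exists_card_eq_kappa hlt
  have hle := hmax (S \ T) sdiff_subset (by rwa [Finset.sdiff_sdiff_eq_self hTS])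
  have hT := card_sdiff_add_card_eq_card hTS
  have hR' := card_sdiff_add_card_eq_card hR
  omega

/-- Observation 4 (part 1): if `i` champions `j` and `G_ij` is a maximum-cardinality subset
of `X_j ∪ {g}` whose removal leaves a bundle `i` still envies, then after removing any
further good `h`, no agent `k` prefers the resulting bundle to his own. -/
theorem nobody_strongly_envies_champion_bundle {G : Type*} [DecidableEq G] (M : Finset G)
    (v : Fin 3 → G → ℝ) (hv : ∀ i : Fin 3, ∀ g ∈ M, 0 ≤ v i g)
    (X : Fin 3 → Finset G) (hXM : ∀ i, X i ⊆ M)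
    (hdisj : ∀ i j, i ≠ j → Disjoint (X i) (X j))
    (g : G) (hg : g ∈ M) (hun : g ∉ X 0 ∪ X 1 ∪ X 2)
    (i j : Fin 3) (hch : MostEnvious v X i (X j ∪ {g}))
    (Gij : Finset G) (hGsub : Gij ⊆ X j ∪ {g})
    (hGval : val (v i) (X i) < val (v i) ((X j ∪ {g}) \ Gij))
    (hGmax : ∀ G' ⊆ X j ∪ {g},
      val (v i) (X i) < val (v i) ((X j ∪ {g}) \ G') → G'.card ≤ Gij.card)
    (k : Fin 3) (h : G) (hh : h ∈ (X j ∪ {g}) \ Gij) :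
    val (v k) (((X j ∪ {g}) \ Gij) \ {h}) ≤ val (v k) (X k) := by
  by_contra! hlt
  have hsub : ((X j ∪ {g}) \ Gij) \ {h} ⊆ X j ∪ {g} := sdiff_subset.trans sdiff_subset
  have hSM : X j ∪ {g} ⊆ M := union_subset (hXM j) (singleton_subset_iff.2 hg)
  have hk : val (v k) (X k) < val (v k) (X j ∪ {g}) :=
    hlt.trans_le (sum_le_sum_of_subset_of_nonneg hsub fun x hx _ => hv k x (hSM hx))
  have hcard : (((X j ∪ {g}) \ Gij) \ {h}).card < ((X j ∪ {g}) \ Gij).card :=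
    card_lt_card (sdiff_ssubset (singleton_subset_iff.2 hh) (singleton_nonempty h))
  exact absurd hcard (((card_sdiff_le_kappa hGsub hch.1 hGmax).trans (hch.2 k hk)).trans
    (kappa_le_card hsub hlt)).not_gt
end

section
/- Let X be a partial EFX allocation and g an unallocated good. Let s be an agent and suppose some agent i champions s and i is reachable from s in the envy graph E_X (there is a sequence of agents s = t_1, t_2, …, t_k = i with v_{t_a}(X_{t_{a+1}}) > v_{t_a}(X_{t_a}) for each a < k). Then there exists a partial EFX allocation Y with Y_1 ∪ Y_2 ∪ Y_3 ⊆ X_1 ∪ X_2 ∪ X_3 ∪ {g} such that v_j(Y_j) ≥ v_j(X_j) for every agent j and v_s(Y_s) > v_s(X_s); in particular Y Pareto dominates X. -/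
open Finset

/-- On three vertices, a vertex `i` reachable from `s` is reachable by a path of length at most
two; closing this path up gives a permutation that sends `i` to `s` and every other vertex either
to itself or to one of its out-neighbours. -/
theorem exists_perm_of_reflTransGen {r : Fin 3 → Fin 3 → Prop} {s i : Fin 3}
    (h : Relation.ReflTransGen r s i) :
    ∃ σ : Equiv.Perm (Fin 3), σ i = s ∧ ∀ j, j ≠ i → σ j = j ∨ r j (σ j) := by
  have short : s = i ∨ r s i ∨ ∃ m, m ≠ s ∧ m ≠ i ∧ s ≠ i ∧ r s m ∧ r m i := by
    induction h using Relation.ReflTransGen.head_induction_on with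
    | refl => exact Or.inl rfl
    | @head a b hab _ ih =>
      by_cases hai : a = i
      · exact Or.inl hai
      rcases ih with rfl | hbi | ⟨m, hmb, hmi, hbi, hbm, hm⟩
      · exact Or.inr (Or.inl hab)
      · by_cases hba : b = a
        · exact Or.inr (Or.inl (hba ▸ hbi))
        by_cases hb : b = i
        · exact Or.inr (Or.inl (hb ▸ hab))
        · exact Or.inr (Or.inr ⟨b, hba, hb, hai, hab, hbi⟩)
      · obtain rfl | rfl : a = b ∨ a = m := by omega
        · exact Or.inr (Or.inr ⟨m, hmb, hmi, hbi, hbm, hm⟩)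
        · exact Or.inr (Or.inl hm)
  rcases short with rfl | hsi | ⟨m, hms, hmi, hsi, hsm, hm⟩
  · exact ⟨1, rfl, fun j _ => Or.inl rfl⟩
  · refine ⟨Equiv.swap s i, Equiv.swap_apply_right s i, fun j hj => ?_⟩
    by_cases hjs : j = s
    · subst hjs
      exact Or.inr (by simpa using hsi)
    · exact Or.inl (Equiv.swap_apply_of_ne_of_ne hjs hj)
  · refine ⟨Equiv.swap s i * Equiv.swap s m, ?_, fun j hj => Or.inr ?_⟩
    · simp [Equiv.swap_apply_of_ne_of_ne hsi.symm hmi.symm]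
    · obtain rfl | rfl : j = s ∨ j = m := by omega
      · simpa [Equiv.swap_apply_of_ne_of_ne hms hmi] using hsm
      · simpa using hm

theorem val_mono {G : Type*} {v : G → ℝ} {S T : Finset G} (hST : S ⊆ T)
    (hv : ∀ g ∈ T, 0 ≤ v g) : val v S ≤ val v T :=
  Finset.sum_le_sum_of_subset_of_nonneg hST fun g hg _ => hv g hg

/-- A most envious agent for `S` prefers some `T ⊆ S` to her own bundle, while no agent prefers
`T` minus a good to her own bundle. -/
theorem MostEnvious.exists_subset {G : Type*} [DecidableEq G] {v : Fin 3 → G → ℝ}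
    {X : Fin 3 → Finset G} {i : Fin 3} {S : Finset G} (h : MostEnvious v X i S)
    (hv : ∀ k, ∀ g ∈ S, 0 ≤ v k g) :
    ∃ T ⊆ S, val (v i) (X i) < val (v i) T ∧
      ∀ k, ∀ g ∈ T, val (v k) (T \ {g}) ≤ val (v k) (X k) := by
  obtain ⟨T, hTS, hcard, hT⟩ :
      kappa (v i) (X i) S ∈ {n : ℕ | ∃ S' ⊆ S, S'.card = n ∧ val (v i) (X i) < val (v i) S'} :=
    Nat.sInf_mem ⟨S.card, S, Finset.Subset.refl S, rfl, h.1⟩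
  refine ⟨T, hTS, hT, fun k g hg => ?_⟩
  by_contra! hk
  have hsub : T \ {g} ⊆ S := Finset.sdiff_subset.trans hTS
  have hkappa : kappa (v k) (X k) S ≤ (T \ {g}).card := Nat.sInf_le ⟨T \ {g}, hsub, rfl, hk⟩
  have hle := h.2 k (hk.trans_le (val_mono hsub (hv k)))
  have hlt : (T \ {g}).card < T.card :=
    Finset.card_lt_card (Finset.sdiff_ssubset (Finset.singleton_subset_iff.2 hg) (by simp))
  omega

/-- If some agent `i` champions `s` and `i` is reachable from `s` in the envy graph, then
there is a Pareto dominating partial EFX allocation (using only goods of `X` plus `g`)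
in which `s` is strictly better off. -/
theorem champion_reachable_gives_dominating_efx {G : Type*} [DecidableEq G] (M : Finset G)
    (v : Fin 3 → G → ℝ) (hv : ∀ i : Fin 3, ∀ g ∈ M, 0 ≤ v i g)
    (X : Fin 3 → Finset G) (hXM : ∀ i, X i ⊆ M)
    (hdisj : ∀ i j, i ≠ j → Disjoint (X i) (X j))
    (hEFX : EFX v X)
    (g : G) (hg : g ∈ M) (hun : g ∉ X 0 ∪ X 1 ∪ X 2)
    (s i : Fin 3)
    (hch : MostEnvious v X i (X s ∪ {g}))
    (hreach : Relation.ReflTransGen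
      (fun a b => val (v a) (X a) < val (v a) (X b)) s i) :
    ∃ Y : Fin 3 → Finset G,
      (∀ i, Y i ⊆ M) ∧
      (∀ i j, i ≠ j → Disjoint (Y i) (Y j)) ∧
      Y 0 ∪ Y 1 ∪ Y 2 ⊆ X 0 ∪ X 1 ∪ X 2 ∪ {g} ∧
      EFX v Y ∧
      (∀ j, val (v j) (X j) ≤ val (v j) (Y j)) ∧
      val (v s) (X s) < val (v s) (Y s) := by
  have hgX : ∀ j, g ∉ X j := by
    intro j
    fin_cases j <;> simp_all
  have hSM : X s ∪ {g} ⊆ M := Finset.union_subset (hXM s) (Finset.singleton_subset_iff.2 hg)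
  obtain ⟨T, hTS, hTi, hTmin⟩ := hch.exists_subset fun k h hh => hv k h (hSM hh)
  obtain ⟨σ, hσi, hσ⟩ := exists_perm_of_reflTransGen hreach
  have hσs : ∀ j, j ≠ i → σ j ≠ s := fun j hj hjs => hj (σ.injective (hjs.trans hσi.symm))
  have hTdisj : ∀ j, j ≠ s → Disjoint T (X j) := fun j hj =>
    Finset.disjoint_of_subset_left hTS (Finset.disjoint_union_left.2
      ⟨hdisj s j hj.symm, Finset.disjoint_singleton_left.2 (hgX j)⟩)
  have hYi : Function.update X s T (σ i) = T := by rw [hσi, Function.update_self]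
  have hYne : ∀ j, j ≠ i → Function.update X s T (σ j) = X (σ j) := fun j hj =>
    Function.update_of_ne (hσs j hj) _ _
  have hYsub : ∀ j, Function.update X s T (σ j) ⊆ X 0 ∪ X 1 ∪ X 2 ∪ {g} := by
    have hX : ∀ j, X j ⊆ X 0 ∪ X 1 ∪ X 2 := by
      intro j h hh
      fin_cases j <;> simp_all
    intro j
    by_cases hj : j = i
    · rw [hj, hYi]
      exact hTS.trans (Finset.union_subset_union_left (hX s))
    · rw [hYne j hj]
      exact (hX _).trans Finset.subset_union_left
  have hmono : ∀ j, val (v j) (X j) ≤ val (v j) (Function.update X s T (σ j)) := by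
    intro j
    by_cases hj : j = i
    · rw [hj, hYi]
      exact hTi.le
    · rw [hYne j hj]
      rcases hσ j hj with h | h
      · rw [h]
      · exact h.le
  refine ⟨fun j => Function.update X s T (σ j), fun j => (hYsub j).trans ?_, fun j k hjk => ?_,
    Finset.union_subset (Finset.union_subset (hYsub 0) (hYsub 1)) (hYsub 2),
    fun j k h hh => ?_, hmono, ?_⟩
  · exact Finset.union_subset (Finset.union_subset (Finset.union_subset (hXM 0) (hXM 1)) (hXM 2))
      (Finset.singleton_subset_iff.2 hg)
  · dsimp only
    by_cases hj : j = i
    · have hk : k ≠ i := fun hk => hjk (hj.trans hk.symm)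
      rw [hj, hYi, hYne k hk]
      exact hTdisj _ (hσs k hk)
    · rw [hYne j hj]
      by_cases hk : k = i
      · rw [hk, hYi]
        exact (hTdisj _ (hσs j hj)).symm
      · rw [hYne k hk]
        exact hdisj _ _ (σ.injective.ne hjk)
  · refine le_trans ?_ (hmono j)
    dsimp only at hh ⊢
    by_cases hk : k = i
    · rw [hk, hYi] at hh ⊢
      exact hTmin j h hh
    · rw [hYne k hk] at hh ⊢
      exact hEFX j (σ k) h hh
  · dsimp only
    by_cases hs : s = i
    · subst hs
      rw [hYi]
      exact hTi
    · rw [hYne s hs]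
      exact (hσ s hs).resolve_left (hσs s hs)
end

section
/- Let X be a partial allocation and g an unallocated good. Suppose agent i champions agent j and v_i(X_i) ≥ v_i(X_j), and let G_{ij} be a maximum-cardinality subset G of X_j ∪ {g} with v_i((X_j ∪ {g}) ∖ G) > v_i(X_i). Then g ∉ G_{ij} (hence G_{ij} ⊆ X_j) and v_i(G_{ij}) < v_i(g). -/
open Finset

/-- Observation 6: if `i` champions `j` and does not envy `j`, then the lower-half bundle
`G_ij` does not contain `g` (hence `G_ij ⊆ X_j`) and `v_i(G_ij) < v_i(g)`. -/
theorem champion_no_envy_lower_half {G : Type*} [DecidableEq G] (M : Finset G)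
    (v : Fin 3 → G → ℝ) (hv : ∀ i : Fin 3, ∀ g ∈ M, 0 ≤ v i g)
    (X : Fin 3 → Finset G) (hXM : ∀ i, X i ⊆ M)
    (hdisj : ∀ i j, i ≠ j → Disjoint (X i) (X j))
    (g : G) (hg : g ∈ M) (hun : g ∉ X 0 ∪ X 1 ∪ X 2)
    (i j : Fin 3) (hch : MostEnvious v X i (X j ∪ {g}))
    (hnoenvy : val (v i) (X j) ≤ val (v i) (X i))
    (Gij : Finset G) (hGsub : Gij ⊆ X j ∪ {g})
    (hGval : val (v i) (X i) < val (v i) ((X j ∪ {g}) \ Gij))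
    (hGmax : ∀ G' ⊆ X j ∪ {g},
      val (v i) (X i) < val (v i) ((X j ∪ {g}) \ G') → G'.card ≤ Gij.card) :
    g ∉ Gij ∧ Gij ⊆ X j ∧ val (v i) Gij < v i g := by
  have hgj : g ∉ X j := fun h => hun (by fin_cases j <;> simp_all)
  have hgG : g ∉ Gij := by
    intro hgG
    have hsub : (X j ∪ {g}) \ Gij ⊆ X j := by
      intro x hx
      simp only [mem_sdiff, mem_union, mem_singleton] at hx
      rcases hx with ⟨hx | rfl, hxG⟩
      · exact hx
      · exact absurd hgG hxG
    have hle : val (v i) ((X j ∪ {g}) \ Gij) ≤ val (v i) (X j) :=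
      sum_le_sum_of_subset_of_nonneg hsub fun x hx _ => hv i x (hXM j hx)
    linarith
  refine ⟨hgG, fun x hx => ?_, ?_⟩
  · rcases mem_union.1 (hGsub hx) with h | h
    · exact h
    · exact absurd (mem_singleton.1 h ▸ hx) hgG
  · have hsplit : val (v i) ((X j ∪ {g}) \ Gij) + val (v i) Gij = val (v i) (X j ∪ {g}) :=
      sum_sdiff hGsub
    have hadd : val (v i) (X j ∪ {g}) = val (v i) (X j) + v i g := by
      simp only [_root_.val]
      rw [sum_union (disjoint_singleton_right.2 hgj), sum_singleton]
    linarith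
end

section
/- In a non-degenerate instance, let X be a partial EFX allocation and g an unallocated good, and suppose the envy graph E_X is acyclic and has exactly two sources. Then for every ordering (a, b, c) of the three agents there exists a partial EFX allocation Y with Y_1 ∪ Y_2 ∪ Y_3 ⊆ X_1 ∪ X_2 ∪ X_3 ∪ {g} such that the triple (v_a(Y_a), v_b(Y_b), v_c(Y_c)) is lexicographically strictly greater than (v_a(X_a), v_b(X_b), v_c(X_c)). -/
open Finset

theorem val_mono_of_pos {G : Type*} {u : G → ℝ} {U S T : Finset G} (hu : ∀ h ∈ U, 0 < u h)
    (hT : T ⊆ U) (hST : S ⊆ T) : val u S ≤ val u T :=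
  Finset.sum_le_sum_of_subset_of_nonneg hST fun h hh _ => (hu h (hT hh)).le

section Helpers

variable {G : Type*} [DecidableEq G]

theorem val_union_of_disjoint (u : G → ℝ) {S T : Finset G} (h : Disjoint S T) :
    val u (S ∪ T) = val u S + val u T :=
  Finset.sum_union h

/-- An agent with valuation `u` and a bundle of value `t` does not strongly envy the bundle `S`. -/
def NoStrongEnvy (u : G → ℝ) (S : Finset G) (t : ℝ) : Prop :=
  ∀ h ∈ S, val u (S \ {h}) ≤ t

theorem NoStrongEnvy.mono {u : G → ℝ} {S : Finset G} {s t : ℝ} (h : NoStrongEnvy u S s)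
    (hst : s ≤ t) : NoStrongEnvy u S t :=
  fun x hx => (h x hx).trans hst

theorem noStrongEnvy_of_le {u : G → ℝ} {U S : Finset G} {t : ℝ} (hu : ∀ h ∈ U, 0 < u h)
    (hS : S ⊆ U) (h : val u S ≤ t) : NoStrongEnvy u S t :=
  fun _ _ => (val_mono_of_pos hu hS sdiff_subset).trans h

/-- A partial EFX allocation of goods of `U`. -/
def EFXWithin (v : Fin 3 → G → ℝ) (U : Finset G) (Y : Fin 3 → Finset G) : Prop :=
  (∀ i, Y i ⊆ U) ∧ (∀ i j, i ≠ j → Disjoint (Y i) (Y j)) ∧ EFX v Y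

/-- A set minimal with a property, obtained by discarding elements one at a time. -/
theorem exists_minimal_subset (p : Finset G → Prop) (S₀ : Finset G) (h₀ : p S₀) :
    ∃ S ⊆ S₀, p S ∧ ∀ h ∈ S, ¬ p (S \ {h}) := by
  induction S₀ using Finset.strongInduction with
  | H S₀ ih =>
    by_cases h : ∀ x ∈ S₀, ¬ p (S₀ \ {x})
    · exact ⟨S₀, Subset.rfl, h₀, h⟩
    · push Not at h
      obtain ⟨x, hx, hp⟩ := h
      obtain ⟨S, hS, h1⟩ := ih (S₀ \ {x}) (by grind) hp
      exact ⟨S, hS.trans sdiff_subset, h1⟩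

/-- A minimal subset of `S₀` that some agent prefers to the given thresholds: it has a champion,
and nobody strongly envies it. -/
theorem exists_champion (v : Fin 3 → G → ℝ) (t : Fin 3 → ℝ) (S₀ : Finset G)
    (h₀ : ∃ i, t i < val (v i) S₀) :
    ∃ S ⊆ S₀, (∃ i, t i < val (v i) S) ∧ ∀ i, NoStrongEnvy (v i) S (t i) := by
  obtain ⟨S, hS, h1, h2⟩ := exists_minimal_subset (fun S => ∃ i, t i < val (v i) S) S₀ h₀
  exact ⟨S, hS, h1, fun i h hh => by have := h2 h hh; push Not at this; exact this i⟩

theorem Fin.eq_or_eq_or_eq_of_ne {p q r : Fin 3} (hpq : p ≠ q) (hpr : p ≠ r) (hqr : q ≠ r)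
    (a : Fin 3) : a = p ∨ a = q ∨ a = r := by
  omega

section Allocations

variable {v : Fin 3 → G → ℝ} {U : Finset G} {p q r : Fin 3}

/-- Assembling a partial EFX allocation from three bundles. -/
theorem exists_efxWithin (hv : ∀ i, ∀ h ∈ U, 0 < v i h)
    (hpq : p ≠ q) (hpr : p ≠ r) (hqr : q ≠ r) {P Q R : Finset G}
    (hP : P ⊆ U) (hQ : Q ⊆ U) (hR : R ⊆ U)
    (dPQ : Disjoint P Q) (dPR : Disjoint P R) (dQR : Disjoint Q R)
    (epq : val (v p) Q ≤ val (v p) P ∨ NoStrongEnvy (v p) Q (val (v p) P))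
    (epr : val (v p) R ≤ val (v p) P ∨ NoStrongEnvy (v p) R (val (v p) P))
    (eqp : val (v q) P ≤ val (v q) Q ∨ NoStrongEnvy (v q) P (val (v q) Q))
    (eqr : val (v q) R ≤ val (v q) Q ∨ NoStrongEnvy (v q) R (val (v q) Q))
    (erp : val (v r) P ≤ val (v r) R ∨ NoStrongEnvy (v r) P (val (v r) R))
    (erq : val (v r) Q ≤ val (v r) R ∨ NoStrongEnvy (v r) Q (val (v r) R)) :
    ∃ Y, EFXWithin v U Y ∧ Y p = P ∧ Y q = Q ∧ Y r = R := by
  let Y : Fin 3 → Finset G := fun k => if k = p then P else if k = q then Q else R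
  have hYp : Y p = P := by simp [Y]
  have hYq : Y q = Q := by simp [Y, hpq.symm]
  have hYr : Y r = R := by simp [Y, hpr.symm, hqr.symm]
  have all := Fin.eq_or_eq_or_eq_of_ne hpq hpr hqr
  refine ⟨Y, ⟨?_, ?_, ?_⟩, hYp, hYq, hYr⟩
  · intro i
    rcases all i with rfl | rfl | rfl <;> simp_all
  · intro i j hij
    rcases all i with rfl | rfl | rfl <;> rcases all j with rfl | rfl | rfl <;>
      simp_all [disjoint_comm]
  · intro i j
    have key : val (v i) (Y j) ≤ val (v i) (Y i) ∨
        NoStrongEnvy (v i) (Y j) (val (v i) (Y i)) := by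
      rcases all i with rfl | rfl | rfl <;> rcases all j with rfl | rfl | rfl <;>
        simp only [hYp, hYq, hYr, le_refl, true_or] <;> assumption
    have hYU : Y j ⊆ U := by
      rcases all j with rfl | rfl | rfl <;> simp_all
    exact key.elim (noStrongEnvy_of_le (hv i) hYU) id

/-- Three bundles that nobody strongly envies with respect to the thresholds `t`, and that meet
the thresholds of their owners, form an EFX allocation. -/
theorem exists_efxWithin_of_thresholds (hv : ∀ i, ∀ h ∈ U, 0 < v i h)
    (hpq : p ≠ q) (hpr : p ≠ r) (hqr : q ≠ r) {P Q R : Finset G} {t : Fin 3 → ℝ}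
    (hP : P ⊆ U) (hQ : Q ⊆ U) (hR : R ⊆ U)
    (dPQ : Disjoint P Q) (dPR : Disjoint P R) (dQR : Disjoint Q R)
    (eP : ∀ i, NoStrongEnvy (v i) P (t i)) (eQ : ∀ i, NoStrongEnvy (v i) Q (t i))
    (eR : ∀ i, NoStrongEnvy (v i) R (t i))
    (tp : t p ≤ val (v p) P) (tq : t q ≤ val (v q) Q) (tr : t r ≤ val (v r) R) :
    ∃ Y, EFXWithin v U Y ∧ Y p = P ∧ Y q = Q ∧ Y r = R :=
  exists_efxWithin hv hpq hpr hqr hP hQ hR dPQ dPR dQR (.inr ((eQ p).mono tp))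
    (.inr ((eR p).mono tp)) (.inr ((eP q).mono tq)) (.inr ((eR q).mono tq))
    (.inr ((eP r).mono tr)) (.inr ((eQ r).mono tr))

/-- If `r` accepts both `T` and `W`, and `p` likes `C` best, then `C` can be shrunk so that
one of `p`, `q` takes it, the other takes the better of `T`, `W`, and `r` takes what is left. -/
theorem exists_efxWithin_of_two_acceptable (hv : ∀ i, ∀ h ∈ U, 0 < v i h)
    (hpq : p ≠ q) (hpr : p ≠ r) (hqr : q ≠ r) {T W C : Finset G} {s : ℝ}
    (hT : T ⊆ U) (hW : W ⊆ U) (hC : C ⊆ U)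
    (dTW : Disjoint T W) (dTC : Disjoint T C) (dWC : Disjoint W C)
    (pT : val (v p) T ≤ val (v p) C) (pW : val (v p) W ≤ val (v p) C)
    (rC : val (v r) C ≤ s) (rT : s < val (v r) T) (rW : s < val (v r) W)
    (eT : NoStrongEnvy (v r) T (val (v r) W)) (eW : NoStrongEnvy (v r) W (val (v r) T)) :
    ∃ Y, EFXWithin v U Y ∧ s < val (v r) (Y r) := by
  obtain ⟨C', hC', hbest, hmin⟩ := exists_minimal_subset
    (fun S => max (val (v p) T) (val (v p) W) ≤ val (v p) S ∨
      max (val (v q) T) (val (v q) W) ≤ val (v q) S) C (.inl (max_le pT pW))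
  have ep : NoStrongEnvy (v p) C' (max (val (v p) T) (val (v p) W)) := fun h hh => by
    have := hmin h hh; push Not at this; exact this.1.le
  have eq : NoStrongEnvy (v q) C' (max (val (v q) T) (val (v q) W)) := fun h hh => by
    have := hmin h hh; push Not at this; exact this.2.le
  have rC' : val (v r) C' ≤ s := (val_mono_of_pos (hv r) hC hC').trans rC
  have hCU := hC'.trans hC
  have dT := disjoint_of_subset_right hC' dTC
  have dW := disjoint_of_subset_right hC' dWC
  rcases hbest with h | h
  · obtain ⟨h1, h2⟩ := max_le_iff.1 h
    rcases le_total (val (v q) T) (val (v q) W) with hq | hq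
    · rw [max_eq_right hq] at eq
      obtain ⟨Y, hY, -, -, hr⟩ := exists_efxWithin hv hpq hpr hqr hCU hW hT dW.symm dT.symm
        dTW.symm (.inl h2) (.inl h1) (.inr eq) (.inl hq) (.inl (by linarith)) (.inr eW)
      exact ⟨Y, hY, hr ▸ rT⟩
    · rw [max_eq_left hq] at eq
      obtain ⟨Y, hY, -, -, hr⟩ := exists_efxWithin hv hpq hpr hqr hCU hT hW dT.symm dW.symm
        dTW (.inl h1) (.inl h2) (.inr eq) (.inl hq) (.inl (by linarith)) (.inr eT)
      exact ⟨Y, hY, hr ▸ rW⟩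
  · obtain ⟨h1, h2⟩ := max_le_iff.1 h
    rcases le_total (val (v p) T) (val (v p) W) with hp | hp
    · rw [max_eq_right hp] at ep
      obtain ⟨Y, hY, -, -, hr⟩ := exists_efxWithin hv hpq.symm hqr hpr hCU hW hT dW.symm dT.symm
        dTW.symm (.inl h2) (.inl h1) (.inr ep) (.inl hp) (.inl (by linarith)) (.inr eW)
      exact ⟨Y, hY, hr ▸ rT⟩
    · rw [max_eq_left hp] at ep
      obtain ⟨Y, hY, -, -, hr⟩ := exists_efxWithin hv hpq.symm hqr hpr hCU hT hW dT.symm dW.symm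
        dTW (.inl h1) (.inl h2) (.inr ep) (.inl hp) (.inl (by linarith)) (.inr eT)
      exact ⟨Y, hY, hr ▸ rW⟩

/-- Agent `r` slightly prefers `T` to `D`, the other two agents prefer `C` to both, and a spare
set `B` can be added to `D`: then `r` can get more than `D` in an EFX allocation. -/
theorem exists_efxWithin_of_spare (hv : ∀ i, ∀ h ∈ U, 0 < v i h)
    (hpq : p ≠ q) (hpr : p ≠ r) (hqr : q ≠ r) {T D B C : Finset G}
    (hT : T ⊆ U) (hD : D ⊆ U) (hB : B ⊆ U) (hC : C ⊆ U)
    (dTD : Disjoint T D) (dTB : Disjoint T B) (dTC : Disjoint T C)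
    (dDB : Disjoint D B) (dDC : Disjoint D C) (dBC : Disjoint B C) (hBne : B.Nonempty)
    (pT : val (v p) T ≤ val (v p) C) (qT : val (v q) T ≤ val (v q) C)
    (rC : val (v r) C ≤ val (v r) D) (rT : val (v r) D < val (v r) T)
    (eT : NoStrongEnvy (v r) T (val (v r) D)) :
    ∃ Y, EFXWithin v U Y ∧ val (v r) D < val (v r) (Y r) := by
  have hDB : D ∪ B ⊆ U := union_subset hD hB
  have dTDB : Disjoint T (D ∪ B) := disjoint_union_right.2 ⟨dTD, dTB⟩
  have dDBC : Disjoint (D ∪ B) C := disjoint_union_left.2 ⟨dDC, dBC⟩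
  have all := Fin.eq_or_eq_or_eq_of_ne hpq hpr hqr
  let t : Fin 3 → ℝ := fun i => if i = r then val (v r) T else val (v i) C
  have tp : t p = val (v p) C := by simp [t, hpr]
  have tq : t q = val (v q) C := by simp [t, hqr]
  have tr : t r = val (v r) T := by simp [t]
  by_cases h : ∃ i, t i < val (v i) (D ∪ B)
  · obtain ⟨W, hW, hch, hns⟩ := exists_champion v t _ h
    have ep := hns p
    have eq := hns q
    have er := hns r
    rw [tp] at ep
    rw [tq] at eq
    rw [tr] at er
    have hWU := hW.trans hDB
    have dTW := disjoint_of_subset_right hW dTDB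
    have dWC := disjoint_of_subset_left hW dDBC
    by_cases hp : val (v p) C < val (v p) W
    · obtain ⟨Y, hY, -, -, hr⟩ := exists_efxWithin hv hpq hpr hqr hWU hC hT dWC dTW.symm
        dTC.symm (.inl hp.le) (.inl (by linarith)) (.inr eq) (.inl qT) (.inr er)
        (.inl (by linarith))
      exact ⟨Y, hY, hr ▸ rT⟩
    by_cases hq : val (v q) C < val (v q) W
    · obtain ⟨Y, hY, -, -, hr⟩ := exists_efxWithin hv hpq hpr hqr hC hWU hT dWC.symm dTC.symm
        dTW.symm (.inr ep) (.inl pT) (.inl hq.le) (.inl (by linarith)) (.inl (by linarith))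
        (.inr er)
      exact ⟨Y, hY, hr ▸ rT⟩
    have hr : val (v r) T < val (v r) W := by
      obtain ⟨i, hi⟩ := hch
      rcases all i with rfl | rfl | rfl
      · exact absurd (tp ▸ hi) hp
      · exact absurd (tq ▸ hi) hq
      · exact tr ▸ hi
    exact exists_efxWithin_of_two_acceptable hv hpq hpr hqr hT hWU hC dTW dTC dWC pT
      (not_lt.1 hp) rC rT (rT.trans hr) (eT.mono (rT.trans hr).le) er
  · push Not at h
    have hp := h p
    have hr := h r
    rw [tp] at hp
    rw [tr] at hr
    have hlt : val (v r) D < val (v r) (D ∪ B) := by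
      rw [val_union_of_disjoint _ dDB]
      have : 0 < val (v r) B := Finset.sum_pos (fun h hh => hv r h (hB hh)) hBne
      linarith
    exact exists_efxWithin_of_two_acceptable hv hpq hpr hqr hT hDB hC dTDB dTC dDBC pT hp
      rC rT hlt (eT.mono hlt.le) (noStrongEnvy_of_le (hv r) hDB hr)

end Allocations

section Champions

variable {v : Fin 3 → G → ℝ} {U : Finset G} {p q r : Fin 3} {X : Fin 3 → Finset G}

/-- `Y` is a partial EFX allocation of goods of `U` that Pareto dominates `X`. -/
def ParetoEFX (v : Fin 3 → G → ℝ) (U : Finset G) (X Y : Fin 3 → Finset G) : Prop :=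
  EFXWithin v U Y ∧ (∀ i, val (v i) (X i) ≤ val (v i) (Y i)) ∧
    ∃ i, val (v i) (X i) < val (v i) (Y i)

theorem exists_paretoEFX_of_bundles (hpq : p ≠ q) (hpr : p ≠ r) (hqr : q ≠ r)
    {P Q R : Finset G} (h : ∃ Y, EFXWithin v U Y ∧ Y p = P ∧ Y q = Q ∧ Y r = R)
    (tp : val (v p) (X p) ≤ val (v p) P) (tq : val (v q) (X q) ≤ val (v q) Q)
    (tr : val (v r) (X r) ≤ val (v r) R)
    (hlt : val (v p) (X p) < val (v p) P ∨ val (v q) (X q) < val (v q) Q ∨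
      val (v r) (X r) < val (v r) R) :
    ∃ Y, ParetoEFX v U X Y := by
  obtain ⟨Y, hY, rfl, rfl, rfl⟩ := h
  refine ⟨Y, hY, fun i => ?_, ?_⟩
  · rcases Fin.eq_or_eq_or_eq_of_ne hpq hpr hqr i with rfl | rfl | rfl <;> assumption
  · rcases hlt with h | h | h
    exacts [⟨p, h⟩, ⟨q, h⟩, ⟨r, h⟩]

/-- For a source `p` and an unallocated good `g`, the minimal envied part `A ∪ {g}` of
`X p ∪ {g}`, where `A ∪ B` is a partition of `X p`. -/
theorem exists_champion_of_source (hv : ∀ i, ∀ h ∈ U, 0 < v i h) (hXU : ∀ i, X i ⊆ U)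
    {g : G} (hgU : g ∈ U) (hg : ∀ i, g ∉ X i)
    (hsrc : ∀ i, val (v i) (X p) ≤ val (v i) (X i)) :
    ∃ A B, Disjoint A B ∧ X p = A ∪ B ∧
      (∃ i, val (v i) (X i) < val (v i) (A ∪ {g})) ∧
      ∀ i, NoStrongEnvy (v i) (A ∪ {g}) (val (v i) (X i)) := by
  have hdis : Disjoint (X p) {g} := disjoint_singleton_right.2 (hg p)
  have hgpos : 0 < val (v p) {g} := by simpa [_root_.val] using hv p g hgU
  obtain ⟨S, hS, ⟨i, hi⟩, hns⟩ := exists_champion v (fun i => val (v i) (X i)) (X p ∪ {g})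
    ⟨p, by rw [val_union_of_disjoint _ hdis]; linarith⟩
  have hgS : g ∈ S := by
    by_contra hgS
    have hSX : S ⊆ X p := fun x hx => by
      have := hS hx
      grind
    exact absurd hi (not_lt.2 ((val_mono_of_pos (hv i) (hXU p) hSX).trans (hsrc i)))
  have hSeq : S \ {g} ∪ {g} = S := sdiff_union_of_subset (singleton_subset_iff.2 hgS)
  refine ⟨S \ {g}, X p \ S, ?_, ?_, ⟨i, ?_⟩, fun i => ?_⟩
  · exact disjoint_sdiff.mono_left sdiff_subset
  · ext x
    have := hg p
    have := @hS x
    grind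
  · rwa [hSeq]
  · rw [hSeq]
    exact hns i

/-- The bundles of two sources `p` and `q` are split as `A₁ ∪ B₁` and `A₂ ∪ B₂`, and nobody
strongly envies the upper halves `A₁` and `A₂` augmented by the unallocated good `g`. -/
structure SplitSources (v : Fin 3 → G → ℝ) (U : Finset G) (X : Fin 3 → Finset G)
    (p q r : Fin 3) (g : G) (A₁ B₁ A₂ B₂ : Finset G) : Prop where
  pos : ∀ i, ∀ h ∈ U, 0 < v i h
  hpq : p ≠ q
  hpr : p ≠ r
  hqr : q ≠ r
  subset : ∀ i, X i ⊆ U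
  disjoint : ∀ i j, i ≠ j → Disjoint (X i) (X j)
  efx : ∀ i j, NoStrongEnvy (v i) (X j) (val (v i) (X i))
  mem : g ∈ U
  notMem : ∀ i, g ∉ X i
  source₁ : ∀ i, val (v i) (X p) ≤ val (v i) (X i)
  source₂ : ∀ i, val (v i) (X q) ≤ val (v i) (X i)
  disjoint₁ : Disjoint A₁ B₁
  eq₁ : X p = A₁ ∪ B₁
  disjoint₂ : Disjoint A₂ B₂
  eq₂ : X q = A₂ ∪ B₂
  noEnvy₁ : ∀ i, NoStrongEnvy (v i) (A₁ ∪ {g}) (val (v i) (X i))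
  noEnvy₂ : ∀ i, NoStrongEnvy (v i) (A₂ ∪ {g}) (val (v i) (X i))

namespace SplitSources

variable {g : G} {A₁ B₁ A₂ B₂ : Finset G}

theorem symm (H : SplitSources v U X p q r g A₁ B₁ A₂ B₂) :
    SplitSources v U X q p r g A₂ B₂ A₁ B₁ :=
  ⟨H.pos, H.hpq.symm, H.hqr, H.hpr, H.subset, H.disjoint, H.efx, H.mem, H.notMem, H.source₂,
    H.source₁, H.disjoint₂, H.eq₂, H.disjoint₁, H.eq₁, H.noEnvy₂, H.noEnvy₁⟩

theorem parts_subset (H : SplitSources v U X p q r g A₁ B₁ A₂ B₂) :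
    A₁ ⊆ U ∧ B₁ ⊆ U ∧ A₂ ⊆ U ∧ B₂ ⊆ U ∧ X r ⊆ U ∧ {g} ⊆ U := by
  have h₁ := H.subset p
  have h₂ := H.subset q
  rw [H.eq₁, union_subset_iff] at h₁
  rw [H.eq₂, union_subset_iff] at h₂
  exact ⟨h₁.1, h₁.2, h₂.1, h₂.2, H.subset r, singleton_subset_iff.2 H.mem⟩

theorem parts_disjoint (H : SplitSources v U X p q r g A₁ B₁ A₂ B₂) :
    (Disjoint A₁ A₂ ∧ Disjoint A₁ B₂ ∧ Disjoint B₁ A₂ ∧ Disjoint B₁ B₂) ∧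
    (Disjoint A₁ (X r) ∧ Disjoint B₁ (X r) ∧ Disjoint A₂ (X r) ∧ Disjoint B₂ (X r)) ∧
    (Disjoint A₁ {g} ∧ Disjoint B₁ {g} ∧ Disjoint A₂ {g} ∧ Disjoint B₂ {g} ∧
      Disjoint (X r) {g}) := by
  have dpq := H.disjoint p q H.hpq
  have dpr := H.disjoint p r H.hpr
  have dqr := H.disjoint q r H.hqr
  have gp := H.notMem p
  have gq := H.notMem q
  have gr := H.notMem r
  rw [H.eq₁] at dpq dpr gp
  rw [H.eq₂] at dpq dqr gq
  simp only [disjoint_union_left, disjoint_union_right, mem_union, not_or,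
    disjoint_singleton_right] at *
  tauto

theorem val_left (H : SplitSources v U X p q r g A₁ B₁ A₂ B₂) (i : Fin 3) :
    val (v i) (X p) = val (v i) A₁ + val (v i) B₁ := by
  rw [H.eq₁, val_union_of_disjoint _ H.disjoint₁]

theorem val_right (H : SplitSources v U X p q r g A₁ B₁ A₂ B₂) (i : Fin 3) :
    val (v i) (X q) = val (v i) A₂ + val (v i) B₂ :=
  H.symm.val_left i

/-- Agents `p` and `q` want each other's upper half together with `g`: if the third agent does
not object to `A₂ ∪ B₁`, exchanging the upper halves gives a Pareto improvement. -/
theorem exists_paretoEFX_of_exchange (H : SplitSources v U X p q r g A₁ B₁ A₂ B₂)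
    (q₁ : val (v q) (X q) < val (v q) (A₁ ∪ {g})) (p₂ : val (v p) (X p) < val (v p) (A₂ ∪ {g}))
    (p₁ : val (v p) (A₁ ∪ {g}) ≤ val (v p) (X p))
    (q₂ : val (v q) (A₂ ∪ {g}) ≤ val (v q) (X q))
    (hr : val (v r) (A₂ ∪ B₁) ≤ val (v r) (X r)) :
    ∃ Y, ParetoEFX v U X Y := by
  obtain ⟨⟨d11, -, d12, -⟩, ⟨f1, f2, f3, -⟩, g1, g2, g3, -, g5⟩ := H.parts_disjoint
  obtain ⟨U1, U2, U3, -, Ur, Ug⟩ := H.parts_subset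
  have w₁ := fun i => val_union_of_disjoint (v i) g1
  have w₂ := fun i => val_union_of_disjoint (v i) g3
  have x₂ := fun i => val_union_of_disjoint (v i) d12.symm
  have sqp := H.source₁ q
  have a1 := H.val_left p
  have a2 := H.val_left q
  have tp : val (v p) (X p) < val (v p) (A₂ ∪ B₁) := by linarith [w₁ p, w₂ p, x₂ p]
  refine exists_paretoEFX_of_bundles H.hpq H.hpr H.hqr (exists_efxWithin H.pos H.hpq H.hpr H.hqr
    (union_subset U3 U2) (union_subset U1 Ug) Ur ?_ (disjoint_union_left.2 ⟨f3, f2⟩)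
    (disjoint_union_left.2 ⟨f1, g5.symm⟩) (.inl (by linarith)) (.inr ((H.efx p r).mono tp.le))
    (.inl ?_) (.inr ((H.efx q r).mono q₁.le)) (.inl hr) (.inr (H.noEnvy₁ r)))
    tp.le q₁.le le_rfl (.inl tp)
  · simp only [disjoint_union_left, disjoint_union_right]
    exact ⟨⟨d11.symm, H.disjoint₁.symm⟩, g3, g2⟩
  · have := H.val_right q
    linarith [w₁ q, w₂ q, x₂ q]

/-- If `p` and `q` each champion the other's bundle, there is a Pareto improvement. -/
theorem exists_paretoEFX_of_mutual (H : SplitSources v U X p q r g A₁ B₁ A₂ B₂)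
    (q₁ : val (v q) (X q) < val (v q) (A₁ ∪ {g})) (p₂ : val (v p) (X p) < val (v p) (A₂ ∪ {g}))
    (p₁ : val (v p) (A₁ ∪ {g}) ≤ val (v p) (X p))
    (q₂ : val (v q) (A₂ ∪ {g}) ≤ val (v q) (X q)) :
    ∃ Y, ParetoEFX v U X Y := by
  rcases le_or_gt (val (v r) (A₂ ∪ B₁)) (val (v r) (X r)) with hr | hr
  · exact H.exists_paretoEFX_of_exchange q₁ p₂ p₁ q₂ hr
  · refine H.symm.exists_paretoEFX_of_exchange p₂ q₁ q₂ p₁ ?_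
    obtain ⟨⟨-, d12, d21, -⟩, -⟩ := H.parts_disjoint
    rw [val_union_of_disjoint _ d21.symm] at hr
    rw [val_union_of_disjoint _ d12]
    linarith [H.val_left r, H.val_right r, H.source₁ r, H.source₂ r]

/-- If `q` champions `p`, `r` champions `q`, and `p` envies `r`, then any agent can be made better
off. -/
theorem exists_improvement_of_chain (H : SplitSources v U X p q r g A₁ B₁ A₂ B₂)
    (penv : val (v p) (X p) < val (v p) (X r)) (qenv : val (v q) (X r) ≤ val (v q) (X q))
    (p₁ : val (v p) (A₁ ∪ {g}) ≤ val (v p) (X p)) (q₁ : val (v q) (X q) < val (v q) (A₁ ∪ {g}))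
    (r₁ : val (v r) (A₁ ∪ {g}) ≤ val (v r) (X r)) (p₂ : val (v p) (A₂ ∪ {g}) ≤ val (v p) (X p))
    (q₂ : val (v q) (A₂ ∪ {g}) ≤ val (v q) (X q)) (r₂ : val (v r) (X r) < val (v r) (A₂ ∪ {g}))
    (a : Fin 3) :
    (∃ Y, ParetoEFX v U X Y) ∨ ∃ Y, EFXWithin v U Y ∧ val (v a) (X a) < val (v a) (Y a) := by
  have hpq := H.hpq
  have hpr := H.hpr
  have hqr := H.hqr
  obtain ⟨⟨d11, d12, d21, d22⟩, ⟨f1, f2, f3, f4⟩, g1, g2, g3, g4, g5⟩ := H.parts_disjoint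
  obtain ⟨U1, U2, U3, U4, Ur, Ug⟩ := H.parts_subset
  have w₁ := fun i => val_union_of_disjoint (v i) g1
  have w₂ := fun i => val_union_of_disjoint (v i) g3
  have x := fun i => val_union_of_disjoint (v i) d12
  have gpos : 0 < val (v p) {g} := by simpa [_root_.val] using H.pos p g H.mem
  have hB : B₁.Nonempty := by
    rw [nonempty_iff_ne_empty]
    rintro rfl
    have : val (v p) (∅ : Finset G) = 0 := by simp [_root_.val]
    linarith [H.val_left p, w₁ p]
  have hR : A₁ ∪ B₂ ⊆ U := union_subset U1 U4
  have hP : A₂ ∪ {g} ⊆ U := union_subset U3 Ug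
  have dRP : Disjoint (A₁ ∪ B₂) (A₂ ∪ {g}) := by
    simp only [disjoint_union_left, disjoint_union_right]
    exact ⟨⟨d11, H.disjoint₂.symm⟩, g1, g4⟩
  have dRC : Disjoint (A₁ ∪ B₂) (X r) := disjoint_union_left.2 ⟨f1, f4⟩
  have dPC : Disjoint (A₂ ∪ {g}) (X r) := disjoint_union_left.2 ⟨f3, g5.symm⟩
  have qR : val (v q) (X q) < val (v q) (A₁ ∪ B₂) := by
    linarith [H.val_right q, w₁ q, w₂ q, x q]
  have rR : val (v r) (A₁ ∪ B₂) ≤ val (v r) (X r) := by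
    linarith [H.val_right r, w₁ r, w₂ r, x r, H.source₂ r]
  rcases le_or_gt (val (v p) (A₁ ∪ B₂)) (val (v p) (X r)) with pR | pR
  · left
    exact exists_paretoEFX_of_bundles hpq hpr hqr (exists_efxWithin H.pos hpq hpr hqr Ur hR hP
      dRC.symm dPC.symm dRP (.inl pR) (.inl (by linarith)) (.inl (by linarith))
      (.inl (by linarith)) (.inl r₂.le) (.inl (by linarith))) penv.le qR.le r₂.le (.inl penv)
  right
  rcases Fin.eq_or_eq_or_eq_of_ne hpq hpr hqr a with rfl | rfl | rfl
  · obtain ⟨Z, hZ, hch, hmin⟩ := exists_minimal_subset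
      (fun S => val (v a) (X r) < val (v a) S ∨
        max (val (v q) (X r)) (val (v q) (A₂ ∪ {g})) < val (v q) S) (A₁ ∪ B₂) (.inl pR)
    have ep : NoStrongEnvy (v a) Z (val (v a) (X r)) := fun h hh => by
      have := hmin h hh; push Not at this; exact this.1
    have eq : NoStrongEnvy (v q) Z (max (val (v q) (X r)) (val (v q) (A₂ ∪ {g}))) :=
      fun h hh => by have := hmin h hh; push Not at this; exact this.2
    have rZ : val (v r) Z ≤ val (v r) (X r) := (val_mono_of_pos (H.pos r) hR hZ).trans rR
    have dZP := disjoint_of_subset_left hZ dRP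
    have dZC := disjoint_of_subset_left hZ dRC
    have hZU := hZ.trans hR
    rcases hch with h | h
    · have hlt : val (v a) (X a) < val (v a) Z := penv.trans h
      rcases le_total (val (v q) (X r)) (val (v q) (A₂ ∪ {g})) with hq | hq
      · rw [max_eq_right hq] at eq
        obtain ⟨Y, hY, hp, -, -⟩ := exists_efxWithin H.pos hpq hpr hqr hZU hP Ur dZP dZC dPC
          (.inl (by linarith)) (.inl h.le) (.inr eq) (.inl hq) (.inl rZ) (.inr (H.noEnvy₂ r))
        exact ⟨Y, hY, hp ▸ hlt⟩
      · rw [max_eq_left hq] at eq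
        obtain ⟨Y, hY, hp, -, -⟩ := exists_efxWithin H.pos hpq hpr hqr hZU Ur hP dZC dZP dPC.symm
          (.inl h.le) (.inl (by linarith)) (.inr eq) (.inl hq) (.inl (by linarith)) (.inl r₂.le)
        exact ⟨Y, hY, hp ▸ hlt⟩
    · obtain ⟨h1, h2⟩ := max_lt_iff.1 h
      obtain ⟨Y, hY, hp, -, -⟩ := exists_efxWithin H.pos hpq hpr hqr Ur hZU hP dZC.symm dPC.symm
        dZP (.inr ep) (.inl (by linarith)) (.inl h1.le) (.inl h2.le) (.inl r₂.le)
        (.inl (by linarith))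
      exact ⟨Y, hY, hp ▸ penv⟩
  · refine exists_efxWithin_of_spare H.pos hpr hpq hqr.symm (T := A₁ ∪ {g}) (D := X a) (B := B₁)
      (C := X r) (union_subset U1 Ug) (H.subset a) U2 Ur ?_ ?_ ?_ ?_ (H.disjoint a r hqr) f2 hB
      (by linarith) r₁ qenv q₁ (H.noEnvy₁ a)
    · rw [H.eq₂]
      simp only [disjoint_union_left, disjoint_union_right]
      exact ⟨⟨d11, g3.symm⟩, d12, g4.symm⟩
    · exact disjoint_union_left.2 ⟨H.disjoint₁, g2.symm⟩
    · exact disjoint_union_left.2 ⟨f1, g5.symm⟩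
    · rw [H.eq₂]
      exact disjoint_union_left.2 ⟨d21.symm, d22.symm⟩
  · refine exists_efxWithin_of_spare H.pos hpq hpr hqr (T := A₂ ∪ {g}) (D := X a) (B := B₁)
      (C := A₁ ∪ B₂) hP Ur U2 hR dPC ?_ dRP.symm f2.symm dRC.symm ?_ hB (by linarith)
      (by linarith) rR r₂ (H.noEnvy₂ a)
    · exact disjoint_union_left.2 ⟨d21.symm, g2.symm⟩
    · exact disjoint_union_right.2 ⟨H.disjoint₁.symm, d22⟩

end SplitSources

/-- With two sources `p` and `q`, the third agent being envied by `p`, there is either a Pareto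
improvement or, for each agent `a`, an EFX allocation that improves `a`. -/
theorem exists_improvement_of_two_sources (hv : ∀ i, ∀ h ∈ U, 0 < v i h)
    (hpq : p ≠ q) (hpr : p ≠ r) (hqr : q ≠ r) (hXU : ∀ i, X i ⊆ U)
    (hdisj : ∀ i j, i ≠ j → Disjoint (X i) (X j)) (hEFX : EFX v X)
    {g : G} (hgU : g ∈ U) (hg : ∀ i, g ∉ X i)
    (hsp : ∀ i, val (v i) (X p) ≤ val (v i) (X i)) (hsq : ∀ i, val (v i) (X q) ≤ val (v i) (X i))
    (penv : val (v p) (X p) < val (v p) (X r)) (a : Fin 3) :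
    (∃ Y, ParetoEFX v U X Y) ∨ ∃ Y, EFXWithin v U Y ∧ val (v a) (X a) < val (v a) (Y a) := by
  obtain ⟨A₁, B₁, d₁, e₁, ⟨i, hi⟩, n₁⟩ := exists_champion_of_source hv hXU hgU hg hsp
  obtain ⟨A₂, B₂, d₂, e₂, ⟨j, hj⟩, n₂⟩ := exists_champion_of_source hv hXU hgU hg hsq
  have H : SplitSources v U X p q r g A₁ B₁ A₂ B₂ :=
    ⟨hv, hpq, hpr, hqr, hXU, hdisj, hEFX, hgU, hg, hsp, hsq, d₁, e₁, d₂, e₂, n₁, n₂⟩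
  obtain ⟨U1, -, U3, -, -, Ug⟩ := H.parts_subset
  have hS₁ : A₁ ∪ {g} ⊆ U := union_subset U1 Ug
  have hS₂ : A₂ ∪ {g} ⊆ U := union_subset U3 Ug
  have dS₁ : ∀ k, k ≠ p → Disjoint (A₁ ∪ {g}) (X k) := fun k hk =>
    disjoint_union_left.2 ⟨disjoint_of_subset_left (e₁ ▸ subset_union_left) (hdisj p k hk.symm),
      disjoint_singleton_left.2 (hg k)⟩
  have dS₂ : ∀ k, k ≠ q → Disjoint (A₂ ∪ {g}) (X k) := fun k hk =>
    disjoint_union_left.2 ⟨disjoint_of_subset_left (e₂ ▸ subset_union_left) (hdisj q k hk.symm),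
      disjoint_singleton_left.2 (hg k)⟩
  have nX : ∀ k i, NoStrongEnvy (v i) (X k) (val (v i) (X i)) := fun k i => hEFX i k
  by_contra! hcon
  obtain ⟨hP, hne⟩ := hcon
  have key : ∀ {P Q R : Finset G}, P ⊆ U → Q ⊆ U → R ⊆ U → Disjoint P Q → Disjoint P R →
      Disjoint Q R → (∀ i, NoStrongEnvy (v i) P (val (v i) (X i))) →
      (∀ i, NoStrongEnvy (v i) Q (val (v i) (X i))) →
      (∀ i, NoStrongEnvy (v i) R (val (v i) (X i))) →
      val (v p) (X p) ≤ val (v p) P → val (v q) (X q) ≤ val (v q) Q →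
      val (v r) (X r) ≤ val (v r) R → ¬ (val (v p) (X p) < val (v p) P ∨
        val (v q) (X q) < val (v q) Q ∨ val (v r) (X r) < val (v r) R) := by
    intro P Q R h1 h2 h3 h4 h5 h6 h7 h8 h9 h10 h11 h12 h13
    obtain ⟨Y, hY⟩ := exists_paretoEFX_of_bundles hpq hpr hqr
      (exists_efxWithin_of_thresholds hv hpq hpr hqr h1 h2 h3 h4 h5 h6 h7 h8 h9 h10 h11 h12)
      h10 h11 h12 h13
    exact hP Y hY
  have p₁ : val (v p) (A₁ ∪ {g}) ≤ val (v p) (X p) := by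
    by_contra! h
    exact key hS₁ (hXU q) (hXU r) (dS₁ q hpq.symm) (dS₁ r hpr.symm) (hdisj q r hqr) n₁ (nX q)
      (nX r) h.le le_rfl le_rfl (.inl h)
  have r₁ : val (v r) (A₁ ∪ {g}) ≤ val (v r) (X r) := by
    by_contra! h
    exact key (hXU r) (hXU q) hS₁ (hdisj r q hqr.symm) (dS₁ r hpr.symm).symm
      (dS₁ q hpq.symm).symm (nX r) (nX q) n₁ penv.le le_rfl h.le (.inl penv)
  have q₂ : val (v q) (A₂ ∪ {g}) ≤ val (v q) (X q) := by
    by_contra! h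
    exact key (hXU p) hS₂ (hXU r) (dS₂ p hpq).symm (hdisj p r hpr) (dS₂ r hqr.symm) (nX p) n₂
      (nX r) le_rfl h.le le_rfl (.inr (.inl h))
  have q₁ : val (v q) (X q) < val (v q) (A₁ ∪ {g}) := by
    rcases Fin.eq_or_eq_or_eq_of_ne hpq hpr hqr i with rfl | rfl | rfl
    exacts [absurd hi (not_lt.2 p₁), hi, absurd hi (not_lt.2 r₁)]
  have p₂ : val (v p) (A₂ ∪ {g}) ≤ val (v p) (X p) := by
    by_contra! h
    obtain ⟨Y, hY⟩ := H.exists_paretoEFX_of_mutual q₁ h p₁ q₂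
    exact hP Y hY
  have r₂ : val (v r) (X r) < val (v r) (A₂ ∪ {g}) := by
    rcases Fin.eq_or_eq_or_eq_of_ne hpq hpr hqr j with rfl | rfl | rfl
    exacts [absurd hj (not_lt.2 p₂), absurd hj (not_lt.2 q₂), hj]
  have qenv : val (v q) (X r) ≤ val (v q) (X q) := by
    by_contra! h
    exact key (hXU p) (hXU r) hS₂ (hdisj p r hpr) (dS₂ p hpq).symm (dS₂ r hqr.symm).symm (nX p)
      (nX r) n₂ le_rfl h.le r₂.le (.inr (.inl h))
  rcases H.exists_improvement_of_chain penv qenv p₁ q₁ r₁ p₂ q₂ r₂ a with ⟨Y, hY⟩ | ⟨Y, hY, h⟩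
  · exact hP Y hY
  · exact absurd h (not_lt.2 (hne Y hY))

end Champions

end Helpers

/-- Lemma 10 (two sources): in a non-degenerate instance with a partial EFX allocation `X`,
an unallocated good `g`, and an acyclic envy graph with exactly two sources, for every
ordering `(a,b,c)` of the agents there is a partial EFX allocation `Y` (over the goods of
`X` plus `g`) whose valuation triple is lexicographically strictly greater. -/
theorem two_sources_lex_dominating_efx {G : Type*} [DecidableEq G] (M : Finset G)
    (v : Fin 3 → G → ℝ) (hv : ∀ i : Fin 3, ∀ g ∈ M, 0 ≤ v i g)
    (hnd : ∀ i : Fin 3, ∀ S ⊆ M, ∀ T ⊆ M, S ≠ T → val (v i) S ≠ val (v i) T)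
    (X : Fin 3 → Finset G) (hXM : ∀ i, X i ⊆ M)
    (hdisj : ∀ i j, i ≠ j → Disjoint (X i) (X j))
    (hEFX : EFX v X)
    (g : G) (hg : g ∈ M) (hun : g ∉ X 0 ∪ X 1 ∪ X 2)
    (hacyc : ∀ i : Fin 3, ¬ Relation.TransGen
      (fun a b => val (v a) (X a) < val (v a) (X b)) i i)
    (s₁ s₂ : Fin 3) (hs12 : s₁ ≠ s₂)
    (hsrc₁ : ∀ i : Fin 3, ¬ val (v i) (X i) < val (v i) (X s₁))
    (hsrc₂ : ∀ i : Fin 3, ¬ val (v i) (X i) < val (v i) (X s₂))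
    (honly : ∀ j : Fin 3,
      (∀ i : Fin 3, ¬ val (v i) (X i) < val (v i) (X j)) → j = s₁ ∨ j = s₂) :
    ∀ a b c : Fin 3, a ≠ b → a ≠ c → b ≠ c →
      ∃ Y : Fin 3 → Finset G,
        (∀ i, Y i ⊆ M) ∧
        (∀ i j, i ≠ j → Disjoint (Y i) (Y j)) ∧
        Y 0 ∪ Y 1 ∪ Y 2 ⊆ X 0 ∪ X 1 ∪ X 2 ∪ {g} ∧
        EFX v Y ∧
        (val (v a) (X a) < val (v a) (Y a) ∨
          (val (v a) (Y a) = val (v a) (X a) ∧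
            (val (v b) (X b) < val (v b) (Y b) ∨
              (val (v b) (Y b) = val (v b) (X b) ∧
                val (v c) (X c) < val (v c) (Y c))))) := by
  intro a b c hab hac hbc
  set U := X 0 ∪ X 1 ∪ X 2 ∪ {g} with hU
  have hXU : ∀ i, X i ⊆ U := by
    intro i x hx
    fin_cases i <;> simp_all
  have hgU : g ∈ U := by simp [hU]
  have hUM : U ⊆ M := by
    have h0 := hXM 0
    have h1 := hXM 1
    have h2 := hXM 2
    grind
  have hgX : ∀ i, g ∉ X i := by
    intro i
    fin_cases i <;> simp_all
  have hpos : ∀ i, ∀ h ∈ U, 0 < v i h := by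
    intro i h hh
    have hM := hUM hh
    have := hnd i {h} (singleton_subset_iff.2 hM) ∅ (empty_subset _) (singleton_ne_empty h)
    simp only [_root_.val, sum_singleton, sum_empty] at this
    exact lt_of_le_of_ne (hv i h hM) this.symm
  have main : (∃ Y, ParetoEFX v U X Y) ∨
      ∃ Y, EFXWithin v U Y ∧ val (v a) (X a) < val (v a) (Y a) := by
    obtain ⟨t, ht1, ht2⟩ : ∃ t : Fin 3, t ≠ s₁ ∧ t ≠ s₂ := by
      clear * -
      decide +revert
    obtain ⟨i, hi⟩ : ∃ i, val (v i) (X i) < val (v i) (X t) := by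
      by_contra! h
      exact (honly t fun i => not_lt.2 (h i)).elim ht1 ht2
    rcases Fin.eq_or_eq_or_eq_of_ne hs12 ht1.symm ht2.symm i with rfl | rfl | rfl
    · exact exists_improvement_of_two_sources hpos hs12 ht1.symm ht2.symm hXU hdisj hEFX hgU hgX
        (fun i => not_lt.1 (hsrc₁ i)) (fun i => not_lt.1 (hsrc₂ i)) hi a
    · exact exists_improvement_of_two_sources hpos hs12.symm ht2.symm ht1.symm hXU hdisj hEFX hgU
        hgX (fun i => not_lt.1 (hsrc₂ i)) (fun i => not_lt.1 (hsrc₁ i)) hi a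
    · exact absurd hi (lt_irrefl _)
  have union_sub : ∀ Y, EFXWithin v U Y → Y 0 ∪ Y 1 ∪ Y 2 ⊆ U := fun Y hY =>
    union_subset (union_subset (hY.1 0) (hY.1 1)) (hY.1 2)
  rcases main with ⟨Y, hY, hle, i, hi⟩ | ⟨Y, hY, h⟩
  · refine ⟨Y, fun i => (hY.1 i).trans hUM, hY.2.1, union_sub Y hY, hY.2.2, ?_⟩
    rcases (hle a).lt_or_eq with ha | ha
    · exact .inl ha
    refine .inr ⟨ha.symm, ?_⟩
    rcases (hle b).lt_or_eq with hb | hb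
    · exact .inl hb
    refine .inr ⟨hb.symm, ?_⟩
    rcases Fin.eq_or_eq_or_eq_of_ne hab hac hbc i with rfl | rfl | rfl
    exacts [absurd ha hi.ne, absurd hb hi.ne, hi]
  · exact ⟨Y, fun i => (hY.1 i).trans hUM, hY.2.1, union_sub Y hY, hY.2.2, .inl h⟩
end

section
/- In the Table-1 instance, the partial allocation X with X_1 = {g_2, g_3, g_4}, X_2 = {g_1, g_5}, X_3 = {g_6} (the good g_7 is unallocated) is EFX, and there is no complete EFX allocation X' = (X'_1, X'_2, X'_3) with v_1(X'_1) ≥ 16, v_2(X'_2) ≥ 15 and v_3(X'_3) ≥ 10; in particular, no complete EFX allocation Pareto dominates X. -/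
open Finset

/-- The valuations of the Table-1 instance: agent `i`'s value for good `g_{k+1}` is
`vT i k`. -/
noncomputable def vT : Fin 3 → Fin 7 → ℝ :=
  ![![8, 2, 12, 2, 0, 17, 1],
    ![5, 0, 9, 4, 10, 0, 3],
    ![0, 0, 0, 0, 9, 10, 2]]

/-- The partial allocation `X₁ = {g₂,g₃,g₄}`, `X₂ = {g₁,g₅}`, `X₃ = {g₆}` (goods are
`0`-indexed: good `g_{k+1}` is `k : Fin 7`). -/
def XT : Fin 3 → Finset (Fin 7) :=
  ![{1, 2, 3}, {0, 4}, {5}]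

/-- The Table-1 valuations as natural numbers. -/
def natValT : Fin 3 → Fin 7 → ℕ :=
  ![![8, 2, 12, 2, 0, 17, 1],
    ![5, 0, 9, 4, 10, 0, 3],
    ![0, 0, 0, 0, 9, 10, 2]]

theorem val_vT_eq_natCast (i : Fin 3) (S : Finset (Fin 7)) :
    val (vT i) S = ((∑ g ∈ S, natValT i g : ℕ) : ℝ) := by
  have cast_natValT (g : Fin 7) : vT i g = natValT i g := by
    fin_cases i <;> fin_cases g <;> simp [vT, natValT]
  simp [_root_.val, cast_natValT]

theorem efx_vT_iff (X : Fin 3 → Finset (Fin 7)) :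
    EFX vT X ↔ ∀ i j : Fin 3, ∀ g ∈ X j,
      ∑ h ∈ X j \ {g}, natValT i h ≤ ∑ h ∈ X i, natValT i h := by
  simp only [EFX, val_vT_eq_natCast, Nat.cast_le]

/-- Finite check: if three bundles partitioning the goods give the agents at least `16`, `15`
and `10`, then some agent strongly envies another. -/
theorem not_efx_of_natValT_ge :
    ∀ A : Finset (Fin 7), 16 ≤ ∑ g ∈ A, natValT 0 g →
    ∀ B : Finset (Fin 7), 15 ≤ ∑ g ∈ B, natValT 1 g → Disjoint A B →
    10 ≤ ∑ g ∈ (A ∪ B)ᶜ, natValT 2 g →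
    ¬ ∀ i j : Fin 3, ∀ g ∈ (![A, B, (A ∪ B)ᶜ] : Fin 3 → Finset (Fin 7)) j,
      ∑ h ∈ (![A, B, (A ∪ B)ᶜ] : Fin 3 → Finset (Fin 7)) j \ {g}, natValT i h ≤
        ∑ h ∈ (![A, B, (A ∪ B)ᶜ] : Fin 3 → Finset (Fin 7)) i, natValT i h := by
  decide +kernel

theorem not_efx_vT_of_val_ge (X : Fin 3 → Finset (Fin 7))
    (hdisj : ∀ i j, i ≠ j → Disjoint (X i) (X j)) (hcomplete : X 0 ∪ X 1 ∪ X 2 = Finset.univ)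
    (h0 : 16 ≤ val (vT 0) (X 0)) (h1 : 15 ≤ val (vT 1) (X 1)) (h2 : 10 ≤ val (vT 2) (X 2)) :
    ¬ EFX vT X := by
  have hX2 : X 2 = (X 0 ∪ X 1)ᶜ :=
    (IsCompl.compl_eq ⟨disjoint_union_left.2 ⟨hdisj 0 2 (by decide), hdisj 1 2 (by decide)⟩,
      codisjoint_iff.2 hcomplete⟩).symm
  have hX : X = ![X 0, X 1, (X 0 ∪ X 1)ᶜ] := by
    funext i
    fin_cases i
    exacts [rfl, rfl, hX2]
  rw [val_vT_eq_natCast] at h0 h1 h2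
  rw [hX2] at h2
  rw [efx_vT_iff, hX]
  exact not_efx_of_natValT_ge (X 0) (mod_cast h0) (X 1) (mod_cast h1) (hdisj 0 1 (by decide))
    (mod_cast h2)

/-- In the Table-1 instance, the partial allocation `XT` is EFX, no complete EFX allocation
gives the three agents at least `16`, `15` and `10` respectively, and in particular no
complete EFX allocation Pareto dominates `XT`. -/
theorem table1_no_dominating_complete_efx :
    EFX vT XT ∧
    (¬ ∃ X' : Fin 3 → Finset (Fin 7),
        (∀ i j, i ≠ j → Disjoint (X' i) (X' j)) ∧
        X' 0 ∪ X' 1 ∪ X' 2 = Finset.univ ∧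
        EFX vT X' ∧
        16 ≤ val (vT 0) (X' 0) ∧ 15 ≤ val (vT 1) (X' 1) ∧ 10 ≤ val (vT 2) (X' 2)) ∧
    (¬ ∃ X' : Fin 3 → Finset (Fin 7),
        (∀ i j, i ≠ j → Disjoint (X' i) (X' j)) ∧
        X' 0 ∪ X' 1 ∪ X' 2 = Finset.univ ∧
        EFX vT X' ∧
        (∀ i, val (vT i) (XT i) ≤ val (vT i) (X' i)) ∧
        (∃ i, val (vT i) (XT i) < val (vT i) (X' i))) := by
  refine ⟨?_, ?_, ?_⟩
  · rw [efx_vT_iff]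
    decide
  · rintro ⟨X, hdisj, hcomplete, hefx, h0, h1, h2⟩
    exact not_efx_vT_of_val_ge X hdisj hcomplete h0 h1 h2 hefx
  · rintro ⟨X, hdisj, hcomplete, hefx, hge, -⟩
    have hXT0 : ∑ g ∈ XT 0, natValT 0 g = 16 := by decide
    have hXT1 : ∑ g ∈ XT 1, natValT 1 g = 15 := by decide
    have hXT2 : ∑ g ∈ XT 2, natValT 2 g = 10 := by decide
    have h0 := hge 0
    have h1 := hge 1
    have h2 := hge 2
    rw [val_vT_eq_natCast _ (XT _)] at h0 h1 h2
    rw [hXT0] at h0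
    rw [hXT1] at h1
    rw [hXT2] at h2
    exact not_efx_vT_of_val_ge X hdisj hcomplete (mod_cast h0) (mod_cast h1) (mod_cast h2) hefx
end

section
/- There exists ε₀ > 0 such that for every ε with 0 < ε < ε₀ the following holds in the ε-instance: the partial allocation X with X_1 = {g_2, g_3, g_4}, X_2 = {g_1, g_5}, X_3 = {g_6} (the good g_7 is unallocated) is EFX, and every complete EFX allocation X' = (X'_1, X'_2, X'_3) satisfies v_1(X'_1)·v_2(X'_2)·v_3(X'_3) < v_1(X_1)·v_2(X_2)·v_3(X_3) = (10 + 2ε^5)·(10 + ε)·10. In particular, the Nash welfare of this partial EFX allocation is strictly larger than the Nash welfare of every complete EFX allocation. -/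
open Finset

/-- The valuations of the ε-instance: agent `i`'s value for good `g_{k+1}` is `vE ε i k`. -/
noncomputable def vE (ε : ℝ) : Fin 3 → Fin 7 → ℝ :=
  ![![ε ^ 3 + 6 * ε ^ 5, 2 * ε ^ 5, 10 - ε ^ 3, ε ^ 3, 10 - 2 * ε ^ 3,
      10 + 3 * ε ^ 5, ε ^ 5],
    ![ε, 0, 10 - ε ^ 2 + ε ^ 6, 2 * ε ^ 2, 10, 0, ε - ε ^ 2],
    ![0, 0, 0, 0, 10 - ε ^ 4, 10, 2 * ε ^ 4]]

open Filter Topology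

/-- Value at `ε` of the polynomial whose coefficients, from the constant term up, are listed. -/
noncomputable def evalCoeffs (ε : ℝ) : List ℤ → ℝ
  | [] => 0
  | a :: p => a + ε * evalCoeffs ε p

def addCoeffs : List ℤ → List ℤ → List ℤ
  | [], q => q
  | a :: p, [] => a :: p
  | a :: p, b :: q => (a + b) :: addCoeffs p q

def scaleCoeffs (c : ℤ) (p : List ℤ) : List ℤ := p.map (c * ·)

def mulCoeffs : List ℤ → List ℤ → List ℤ
  | [], _ => []
  | a :: p, q => addCoeffs (scaleCoeffs a q) (0 :: mulCoeffs p q)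

def subCoeffs (p q : List ℤ) : List ℤ := addCoeffs p (scaleCoeffs (-1) q)

/-- The lowest-order nonzero coefficient exists and is positive. -/
def lowestPos : List ℤ → Bool
  | [] => false
  | a :: p => decide (0 < a) || (decide (a = 0) && lowestPos p)

/-- The lowest-order nonzero coefficient, if any, is positive. -/
def lowestNonneg : List ℤ → Bool
  | [] => true
  | a :: p => decide (0 < a) || (decide (a = 0) && lowestNonneg p)

theorem evalCoeffs_add (ε : ℝ) (p q : List ℤ) :
    evalCoeffs ε (addCoeffs p q) = evalCoeffs ε p + evalCoeffs ε q := by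
  induction p generalizing q with
  | nil => simp [addCoeffs, evalCoeffs]
  | cons a p ih =>
    cases q with
    | nil => simp [addCoeffs, evalCoeffs]
    | cons b q => simp only [addCoeffs, evalCoeffs, ih]; push_cast; ring

theorem evalCoeffs_scale (ε : ℝ) (c : ℤ) (p : List ℤ) :
    evalCoeffs ε (scaleCoeffs c p) = c * evalCoeffs ε p := by
  induction p with
  | nil => simp [scaleCoeffs, evalCoeffs]
  | cons a p ih =>
    simp only [scaleCoeffs, List.map_cons, evalCoeffs] at ih ⊢
    rw [ih]; push_cast; ring

theorem evalCoeffs_mul (ε : ℝ) (p q : List ℤ) :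
    evalCoeffs ε (mulCoeffs p q) = evalCoeffs ε p * evalCoeffs ε q := by
  induction p with
  | nil => simp [mulCoeffs, evalCoeffs]
  | cons a p ih =>
    simp only [mulCoeffs, evalCoeffs_add, evalCoeffs_scale, evalCoeffs, ih]; push_cast; ring

theorem evalCoeffs_sub (ε : ℝ) (p q : List ℤ) :
    evalCoeffs ε (subCoeffs p q) = evalCoeffs ε p - evalCoeffs ε q := by
  simp only [subCoeffs, evalCoeffs_add, evalCoeffs_scale]; push_cast; ring

theorem continuous_evalCoeffs (p : List ℤ) : Continuous fun ε => evalCoeffs ε p := by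
  induction p with
  | nil => exact continuous_const
  | cons a p ih => exact continuous_const.add (continuous_id.mul ih)

theorem eventually_evalCoeffs_cons_pos {a : ℤ} (ha : 0 < a) (p : List ℤ) :
    ∀ᶠ ε in 𝓝[>] (0 : ℝ), 0 < evalCoeffs ε (a :: p) := by
  refine ((continuous_evalCoeffs (a :: p)).tendsto 0).eventually_const_lt ?_
    |>.filter_mono nhdsWithin_le_nhds
  simpa [evalCoeffs] using ha

theorem eventually_evalCoeffs_pos {p : List ℤ} (hp : lowestPos p = true) :
    ∀ᶠ ε in 𝓝[>] (0 : ℝ), 0 < evalCoeffs ε p := by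
  induction p with
  | nil => simp [lowestPos] at hp
  | cons a p ih =>
    simp only [lowestPos, Bool.or_eq_true, Bool.and_eq_true, decide_eq_true_eq] at hp
    rcases hp with ha | ⟨rfl, hp⟩
    · exact eventually_evalCoeffs_cons_pos ha p
    · filter_upwards [ih hp, self_mem_nhdsWithin] with ε h hε
      simpa [evalCoeffs] using mul_pos hε h

theorem eventually_evalCoeffs_nonneg {p : List ℤ} (hp : lowestNonneg p = true) :
    ∀ᶠ ε in 𝓝[>] (0 : ℝ), 0 ≤ evalCoeffs ε p := by
  induction p with
  | nil => simp [evalCoeffs]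
  | cons a p ih =>
    simp only [lowestNonneg, Bool.or_eq_true, Bool.and_eq_true, decide_eq_true_eq] at hp
    rcases hp with ha | ⟨rfl, hp⟩
    · exact (eventually_evalCoeffs_cons_pos ha p).mono fun _ h => h.le
    · filter_upwards [ih hp, self_mem_nhdsWithin] with ε h hε
      simpa [evalCoeffs] using mul_nonneg (le_of_lt hε) h

/-- Coefficients in `ε` of the valuations `vE ε`. -/
def valuationCoeffs : Fin 3 → Fin 7 → List ℤ :=
  ![![[0, 0, 0, 1, 0, 6], [0, 0, 0, 0, 0, 2], [10, 0, 0, -1], [0, 0, 0, 1], [10, 0, 0, -2],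
      [10, 0, 0, 0, 0, 3], [0, 0, 0, 0, 0, 1]],
    ![[0, 1], [], [10, 0, -1, 0, 0, 0, 1], [0, 0, 2], [10], [], [0, 1, -1]],
    ![[], [], [], [], [10, 0, 0, 0, -1], [10], [0, 0, 0, 0, 2]]]

theorem evalCoeffs_valuationCoeffs (ε : ℝ) (i : Fin 3) (g : Fin 7) :
    evalCoeffs ε (valuationCoeffs i g) = vE ε i g := by
  fin_cases i <;> fin_cases g <;> simp [valuationCoeffs, vE, evalCoeffs] <;> ring

/-- Coefficients in `ε` of agent `i`'s value for the goods satisfying `S`. -/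
def bundleCoeffs (i : Fin 3) (S : Fin 7 → Bool) : List ℤ :=
  (List.finRange 7).foldr
    (fun g p => bif S g then addCoeffs (valuationCoeffs i g) p else p) []

theorem evalCoeffs_bundleCoeffs (ε : ℝ) (i : Fin 3) (S : Fin 7 → Bool) :
    evalCoeffs ε (bundleCoeffs i S) = val (vE ε i) {g | S g} := by
  have foldr_eq (l : List (Fin 7)) : evalCoeffs ε (l.foldr
      (fun g p => bif S g then addCoeffs (valuationCoeffs i g) p else p) []) =
      (l.map fun g => if S g then vE ε i g else 0).sum := by
    induction l with
    | nil => simp [evalCoeffs]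
    | cons g l ih =>
      cases hg : S g <;> simp [hg, ih, evalCoeffs_add, evalCoeffs_valuationCoeffs]
  rw [bundleCoeffs, foldr_eq, _root_.val, ← Fin.sum_univ_def, Finset.sum_filter]

/-- The bundles of the complete allocation that gives each good `g` to agent `owner g`. -/
def ownedBundle (owner : Fin 7 → Fin 3) (i : Fin 3) : Finset (Fin 7) := {g | owner g = i}

theorem exists_eq_ownedBundle {X : Fin 3 → Finset (Fin 7)}
    (hdisj : ∀ i j, i ≠ j → Disjoint (X i) (X j)) (hcover : X 0 ∪ X 1 ∪ X 2 = Finset.univ) :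
    ∃ owner, X = ownedBundle owner := by
  have hex (g : Fin 7) : ∃ i, g ∈ X i := by
    have hg : g ∈ X 0 ∪ X 1 ∪ X 2 := hcover ▸ Finset.mem_univ g
    simp only [Finset.mem_union] at hg
    rcases hg with (h | h) | h <;> exact ⟨_, h⟩
  choose owner howner using hex
  refine ⟨owner, funext fun i => Finset.ext fun g => ?_⟩
  simp only [ownedBundle, Finset.mem_filter, Finset.mem_univ, true_and]
  refine ⟨fun hg => ?_, fun h => h ▸ howner g⟩
  by_contra hne
  exact Finset.disjoint_left.mp (hdisj _ _ hne) (howner g) hg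

/-- Coefficients of the gap between `(10 + 2ε⁵)(10 + ε)·10` and the welfare of the complete
allocation given by `owner`. -/
def welfareGapCoeffs (owner : Fin 7 → Fin 3) : List ℤ :=
  subCoeffs (mulCoeffs (mulCoeffs [10, 0, 0, 0, 0, 2] [10, 1]) [10])
    (mulCoeffs (mulCoeffs (bundleCoeffs 2 (owner · == 2)) (bundleCoeffs 1 (owner · == 1)))
      (bundleCoeffs 0 (owner · == 0)))

theorem val_ownedBundle (ε : ℝ) (owner : Fin 7 → Fin 3) (i j : Fin 3) :
    val (vE ε i) (ownedBundle owner j) = evalCoeffs ε (bundleCoeffs i (owner · == j)) := by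
  simp [evalCoeffs_bundleCoeffs, ownedBundle]

theorem evalCoeffs_welfareGapCoeffs (ε : ℝ) (owner : Fin 7 → Fin 3) :
    evalCoeffs ε (welfareGapCoeffs owner) = (10 + 2 * ε ^ 5) * (10 + ε) * 10 -
      val (vE ε 0) (ownedBundle owner 0) * val (vE ε 1) (ownedBundle owner 1) *
        val (vE ε 2) (ownedBundle owner 2) := by
  simp only [welfareGapCoeffs, evalCoeffs_sub, evalCoeffs_mul, val_ownedBundle, evalCoeffs]
  push_cast
  ring

/-- Coefficients of agent `i`'s strong envy of the owner of `g`, after removal of `g`. -/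
def envyCoeffs (owner : Fin 7 → Fin 3) (i : Fin 3) (g : Fin 7) : List ℤ :=
  subCoeffs (bundleCoeffs i fun h => owner h == owner g && h != g)
    (bundleCoeffs i (owner · == i))

theorem evalCoeffs_envyCoeffs (ε : ℝ) (owner : Fin 7 → Fin 3) (i : Fin 3) (g : Fin 7) :
    evalCoeffs ε (envyCoeffs owner i g) =
      val (vE ε i) (ownedBundle owner (owner g) \ {g}) - val (vE ε i) (ownedBundle owner i) := by
  rw [envyCoeffs, evalCoeffs_sub, val_ownedBundle, evalCoeffs_bundleCoeffs]
  congr 2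
  ext h
  simp [ownedBundle]

/-- A complete allocation either has smaller welfare or exhibits strong envy. -/
theorem welfareGap_or_strong_envy (owner : Fin 7 → Fin 3) :
    lowestPos (welfareGapCoeffs owner) = true ∨
      ∃ i g, lowestPos (envyCoeffs owner i g) = true := by
  have enumerated : ∀ a b c d e f g : Fin 3,
      lowestPos (welfareGapCoeffs ![a, b, c, d, e, f, g]) = true ∨
        ∃ i h, lowestPos (envyCoeffs ![a, b, c, d, e, f, g] i h) = true := by
    decide +kernel
  have howner : owner = ![owner 0, owner 1, owner 2, owner 3, owner 4, owner 5, owner 6] := by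
    ext g; fin_cases g <;> rfl
  rw [howner]
  exact enumerated _ _ _ _ _ _ _

theorem XT_no_strong_envy : ∀ i j : Fin 3, ∀ g ∈ XT j,
    lowestNonneg (subCoeffs (bundleCoeffs i (· ∈ XT i)) (bundleCoeffs i (· ∈ XT j \ {g}))) =
      true := by
  decide +kernel

theorem eventually_EFX_XT : ∀ᶠ ε in 𝓝[>] (0 : ℝ), EFX (vE ε) XT := by
  simp only [EFX, eventually_all]
  intro i j g hg
  filter_upwards [eventually_evalCoeffs_nonneg (XT_no_strong_envy i j g hg)] with ε h
  simp only [evalCoeffs_sub, evalCoeffs_bundleCoeffs, decide_eq_true_eq,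
    Finset.filter_univ_mem] at h
  exact sub_nonneg.mp h

theorem eventually_welfare_lt (owner : Fin 7 → Fin 3) :
    ∀ᶠ ε in 𝓝[>] (0 : ℝ), EFX (vE ε) (ownedBundle owner) →
      val (vE ε 0) (ownedBundle owner 0) * val (vE ε 1) (ownedBundle owner 1) *
        val (vE ε 2) (ownedBundle owner 2) < (10 + 2 * ε ^ 5) * (10 + ε) * 10 := by
  rcases welfareGap_or_strong_envy owner with hgap | ⟨i, g, henvy⟩
  · filter_upwards [eventually_evalCoeffs_pos hgap] with ε h _
    rw [evalCoeffs_welfareGapCoeffs] at h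
    exact sub_pos.mp h
  · filter_upwards [eventually_evalCoeffs_pos henvy] with ε h hEFX
    rw [evalCoeffs_envyCoeffs] at h
    exact absurd (hEFX i (owner g) g (by simp [ownedBundle])) (sub_pos.mp h).not_ge

theorem val_XT_product (ε : ℝ) :
    val (vE ε 0) (XT 0) * val (vE ε 1) (XT 1) * val (vE ε 2) (XT 2)
      = (10 + 2 * ε ^ 5) * (10 + ε) * 10 := by
  simp [_root_.val, XT, vE]
  ring

/-- For all sufficiently small `ε > 0`, in the ε-instance the partial allocation `XT`
is EFX, its Nash-welfare product equals `(10 + 2ε⁵)(10 + ε)·10`, and every complete EFX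
allocation has a strictly smaller Nash-welfare product. -/
theorem eps_instance_partial_beats_all_complete :
    ∃ ε₀ : ℝ, 0 < ε₀ ∧ ∀ ε : ℝ, 0 < ε → ε < ε₀ →
      EFX (vE ε) XT ∧
      val (vE ε 0) (XT 0) * val (vE ε 1) (XT 1) * val (vE ε 2) (XT 2)
        = (10 + 2 * ε ^ 5) * (10 + ε) * 10 ∧
      ∀ X' : Fin 3 → Finset (Fin 7),
        (∀ i j, i ≠ j → Disjoint (X' i) (X' j)) →
        X' 0 ∪ X' 1 ∪ X' 2 = Finset.univ →
        EFX (vE ε) X' →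
        val (vE ε 0) (X' 0) * val (vE ε 1) (X' 1) * val (vE ε 2) (X' 2)
          < (10 + 2 * ε ^ 5) * (10 + ε) * 10 := by
  have hevent := eventually_EFX_XT.and (eventually_all.mpr eventually_welfare_lt)
  obtain ⟨ε₀, hε₀, hsmall⟩ := mem_nhdsGT_iff_exists_Ioo_subset.mp hevent
  refine ⟨ε₀, hε₀, fun ε hpos hlt => ?_⟩
  obtain ⟨hXT, hcomplete⟩ := hsmall ⟨hpos, hlt⟩
  refine ⟨hXT, val_XT_product ε, fun X' hdisj hcover hEFX => ?_⟩
  obtain ⟨owner, rfl⟩ := exists_eq_ownedBundle hdisj hcover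
  exact hcomplete owner hEFX
end
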